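/- Let X ⊆ P^{n-1} be a hypersurface of degree d cut out by f ∈ ℂ[x_1,…,x_n]_d, with associated square N×N Kalman matrix K_d(f), N = binom(n-1+d,d). Then the reduced singular locus Sing(K(X)) of the Kalman variety is contained in the subvariety of P^{n²-1} cut out by the (N−1)×(N−1) minors of K_d(f). -/

import Mathlib

noncomputable section

/-! ## Zariski topology on complex affine space -/

/-- The Zariski topology on the affine space `ι → ℂ`: the basic open sets are the
complements of hypersurfaces. -/
def zTop (ι : Type*) : TopologicalSpace (ι → ℂ) :=
  TopologicalSpace.generateFrom
    {U | ∃ p : MvPolynomial ι ℂ, U = {x | MvPolynomial.eval x p ≠ 0}}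

/-- Zariski open subset of affine space. -/
def zOpen {ι : Type*} (U : Set (ι → ℂ)) : Prop := @IsOpen _ (zTop ι) U

/-- Zariski closed subset of affine space. -/
def zClosed {ι : Type*} (Z : Set (ι → ℂ)) : Prop := @IsClosed _ (zTop ι) Z

/-- Zariski density. -/
def zDense {ι : Type*} (S : Set (ι → ℂ)) : Prop := @Dense _ (zTop ι) S

/-- Zariski closure. -/
def zClosure {ι : Type*} (S : Set (ι → ℂ)) : Set (ι → ℂ) := @closure _ (zTop ι) S

/-- Irreducibility in the Zariski topology. -/
def zIrred {ι : Type*} (S : Set (ι → ℂ)) : Prop := @IsIrreducible _ (zTop ι) S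

/-- The dimension of a subset of affine space: the topological Krull dimension of the
subspace topology induced by the Zariski topology. -/
def zDim {ι : Type*} (S : Set (ι → ℂ)) : WithBot ℕ∞ :=
  @topologicalKrullDim S (TopologicalSpace.induced Subtype.val (zTop ι))

/-- The common zero set of a family of polynomials. -/
def vanishSet {ι : Type*} (S : Set (MvPolynomial ι ℂ)) : Set (ι → ℂ) :=
  {x | ∀ p ∈ S, MvPolynomial.eval x p = 0}

/-- The ideal of all polynomials vanishing on a subset of affine space. -/
def vanishingIdealOf {ι : Type*} (X : Set (ι → ℂ)) : Ideal (MvPolynomial ι ℂ) where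
  carrier := {p | ∀ x ∈ X, MvPolynomial.eval x p = 0}
  add_mem' := by
    intro a b ha hb x hx
    simp [ha x hx, hb x hx]
  zero_mem' := by
    intro x hx
    simp
  smul_mem' := by
    intro c p hp x hx
    simp [smul_eq_mul, hp x hx]

/-- A subset of `ι → ℂ` is a cone if it is stable under scalar multiplication. -/
def IsCone {ι : Type*} (X : Set (ι → ℂ)) : Prop :=
  ∀ (c : ℂ) (v : ι → ℂ), v ∈ X → c • v ∈ X

/-- The affine-linear subspace cut out by `k` affine-linear equations whose coefficients are
recorded by `a` (the `none` coordinate records the constant term). -/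
def affSlice {ι : Type*} [Fintype ι] {k : ℕ} (a : Fin k × Option ι → ℂ) : Set (ι → ℂ) :=
  {x | ∀ j : Fin k, a (j, none) + ∑ i : ι, a (j, some i) * x i = 0}

/-- `hasConeDegree C k δ` : the projective variety with affine cone `C ⊆ ℂ^ι` and projective
dimension `k` has degree `δ`, expressed by saying that a generic affine-linear slice of `C` of
codimension `k + 1` consists of exactly `δ` points. -/
def hasConeDegree {ι : Type*} [Fintype ι] (C : Set (ι → ℂ)) (k δ : ℕ) : Prop :=
  ∃ U : Set (Fin (k + 1) × Option ι → ℂ), zOpen U ∧ zDense U ∧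
    ∀ a ∈ U, (C ∩ affSlice a).ncard = δ

/-! ## Eigenvectors and the Kalman variety -/

/-- `v` is an eigenvector of the matrix `A`. -/
def IsEigenvector {n : ℕ} (A : Matrix (Fin n) (Fin n) ℂ) (v : Fin n → ℂ) : Prop :=
  v ≠ 0 ∧ ∃ lam : ℂ, A.mulVec v = lam • v

/-- The space of `n × n` complex matrices, presented as an affine space. -/
abbrev MatSpace (n : ℕ) := Fin n × Fin n → ℂ

/-- The matrix corresponding to a point of `MatSpace n`. -/
def toMat {n : ℕ} (A : MatSpace n) : Matrix (Fin n) (Fin n) ℂ :=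
  Matrix.of fun i j => A (i, j)

/-- The affine cone over the Kalman variety `𝒦(X)` of the projective variety whose affine
cone is `X`: all matrices having an eigenvector lying on `X`. -/
def kalmanCone {n : ℕ} (X : Set (Fin n → ℂ)) : Set (MatSpace n) :=
  {A | ∃ v ∈ X, IsEigenvector (toMat A) v}



/-! ## Symmetric powers of matrices and Kalman matrices -/

/-- Index set for the monomials of degree `d` in `n` variables. -/
abbrev MonIdx (n d : ℕ) := Sym (Fin n) d

/-- The exponent vector of the monomial indexed by `σ`. -/
def monExp {n d : ℕ} (σ : MonIdx n d) : Fin n →₀ ℕ :=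
  Multiset.toFinsupp (σ : Multiset (Fin n))

/-- The generic `n × n` matrix, whose entries are the variables of `ℂ[A]`. -/
def genMat (n : ℕ) : Matrix (Fin n) (Fin n) (MvPolynomial (Fin n × Fin n) ℂ) :=
  Matrix.of fun i j => MvPolynomial.X (i, j)

/-- The `d`-th symmetric power `ρ_d(A)` of a square matrix `A`, i.e. the matrix (in the basis of
monomials of degree `d`) of the induced action of `A` on forms of degree `d`: the entry at
`(τ, σ)` is the coefficient of `x^σ` in `(A·x)^τ`. -/
def symPow {R : Type*} [CommRing R] {n : ℕ} (d : ℕ) (A : Matrix (Fin n) (Fin n) R) :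
    Matrix (MonIdx n d) (MonIdx n d) R :=
  Matrix.of fun τ σ =>
    MvPolynomial.coeff (monExp σ)
      (∏ j : Fin n, (∑ k : Fin n, MvPolynomial.C (A j k) * MvPolynomial.X k) ^ (monExp τ j))

/-- The coefficient vector of a form of degree `d`. -/
def coeffVec {n : ℕ} (d : ℕ) (f : MvPolynomial (Fin n) ℂ) : MonIdx n d → ℂ :=
  fun σ => MvPolynomial.coeff (monExp σ) f

/-- The form of degree `d` with coefficient vector `c`. -/
def polyOf {n d : ℕ} (c : MonIdx n d → ℂ) : MvPolynomial (Fin n) ℂ :=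
  ∑ σ : MonIdx n d, MvPolynomial.monomial (monExp σ) (c σ)

/-- The rectangular Kalman matrix of order `d` associated with a `p × N` coefficient matrix `C`:
its rows are the rows of `C`, `C·ρ_d(A)`, ..., `C·ρ_d(A)^{t-1}` for the generic matrix `A`. -/
def kalmanMat {n d p : ℕ} (t : ℕ) (C : Matrix (Fin p) (MonIdx n d) ℂ) :
    Matrix (Fin t × Fin p) (MonIdx n d) (MvPolynomial (Fin n × Fin n) ℂ) :=
  Matrix.of fun r τ =>
    ∑ κ : MonIdx n d, MvPolynomial.C (C r.2 κ) * ((symPow d (genMat n)) ^ (r.1 : ℕ)) κ τ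

/-- The square Kalman matrix `K_d(f)` of a form `f` with coefficient vector `c`: the rows are
`C_f ρ_d(A)^i` for `i = 0, …, N - 1` (indexed by monomials through a fixed enumeration). -/
def kalmanSq {n : ℕ} (d : ℕ) (c : MonIdx n d → ℂ) :
    Matrix (MonIdx n d) (MonIdx n d) (MvPolynomial (Fin n × Fin n) ℂ) :=
  Matrix.of fun σ τ =>
    ∑ κ : MonIdx n d, MvPolynomial.C (c κ) *
      ((symPow d (genMat n)) ^ ((Fintype.equivFin (MonIdx n d)) σ : ℕ)) κ τ

/-- The determinant of the square Kalman matrix of order `d`. -/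
def kalmanDet {n : ℕ} (d : ℕ) (c : MonIdx n d → ℂ) : MvPolynomial (Fin n × Fin n) ℂ :=
  (kalmanSq d c).det

/-- The locus of matrices at which all maximal minors of a (rectangular) matrix of polynomials
in `ℂ[A]` vanish. -/
def maxMinorsZeroSet {n d : ℕ} {ridx : Type*}
    (M : Matrix ridx (MonIdx n d) (MvPolynomial (Fin n × Fin n) ℂ)) : Set (MatSpace n) :=
  {A | ∀ e : MonIdx n d → ridx, Function.Injective e →
    MvPolynomial.eval A (Matrix.det (Matrix.of fun σ τ => M (e σ) τ)) = 0}



/-! ## Polarizations and μ-Kalman varieties -/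

/-- Evaluation of the multihomogeneous polarization `f_μ` of `f` at a tuple of vectors
`v_1, …, v_s` (up to a nonzero rational normalization constant): the coefficient of `t^μ`
in `f(t_1 v_1 + ⋯ + t_s v_s)`. -/
def polarEval {n s : ℕ} (f : MvPolynomial (Fin n) ℂ) (μ : Fin s → ℕ)
    (v : Fin s → Fin n → ℂ) : ℂ :=
  MvPolynomial.coeff (Finsupp.equivFunOnFinite.symm μ)
    (MvPolynomial.eval₂ MvPolynomial.C
      (fun k => ∑ i : Fin s, MvPolynomial.C (v i k) * MvPolynomial.X i) f)

/-- The affine cone over the `μ`-Kalman variety `𝒦_μ(f)`: the Zariski closure of the set of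
matrices admitting linearly independent eigenvectors `v_1, …, v_s` with `f_μ(v_1, …, v_s) = 0`. -/
def muKalmanCone {n : ℕ} (f : MvPolynomial (Fin n) ℂ) {s : ℕ} (μ : Fin s → ℕ) :
    Set (MatSpace n) :=
  zClosure {A | ∃ v : Fin s → (Fin n → ℂ),
    (∀ i, IsEigenvector (toMat A) (v i)) ∧ LinearIndependent ℂ v ∧ polarEval f μ v = 0}

/-- The parts of a partition of `d`, listed as a tuple. -/
def partTuple (d : ℕ) (μ : Nat.Partition d) : Fin (Multiset.card μ.parts) → ℕ :=
  fun i => μ.parts.toList.get (i.cast (Multiset.length_toList _).symm)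

/-- The multiset of nonzero exponents of the monomial indexed by `σ`. -/
def expMultiset {n d : ℕ} (σ : Sym (Fin n) d) : Multiset ℕ :=
  Multiset.filter (fun e => e ≠ 0)
    (Multiset.map (fun i => Multiset.toFinsupp (σ : Multiset (Fin n)) i) Finset.univ.val)

/-! ## Tangent spaces, smooth points and singular loci -/

/-- The Zariski tangent space of `X ⊆ ℂ^ι` at `x`: the common kernel of the differentials at
`x` of all polynomials vanishing on `X`. -/
def tangentSpace {ι : Type*} [Fintype ι] (X : Set (ι → ℂ)) (x : ι → ℂ) :
    Submodule ℂ (ι → ℂ) where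
  carrier := {u | ∀ p : MvPolynomial ι ℂ, (∀ y ∈ X, MvPolynomial.eval y p = 0) →
      ∑ i : ι, u i * MvPolynomial.eval x (MvPolynomial.pderiv i p) = 0}
  add_mem' := by
    intro a b ha hb p hp
    have h1 := ha p hp
    have h2 := hb p hp
    simp only [Pi.add_apply, add_mul, Finset.sum_add_distrib, h1, h2, add_zero]
  zero_mem' := by
    intro p hp
    simp
  smul_mem' := by
    intro c u hu p hp
    have h1 := hu p hp
    simp only [Pi.smul_apply, smul_eq_mul, mul_assoc, ← Finset.mul_sum, h1, mul_zero]

/-- The local dimension of `X` at `x`, in the Zariski topology. -/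
def zLocalDim {ι : Type*} (X : Set (ι → ℂ)) (x : ι → ℂ) : WithBot ℕ∞ :=
  ⨅ (U : Set (ι → ℂ)) (_ : zOpen U) (_ : x ∈ U), zDim (X ∩ U)

/-- `x` is a smooth point of `X`: the Zariski tangent space has dimension equal to the local
dimension of `X` at `x`. -/
def smoothAt {ι : Type*} [Fintype ι] (X : Set (ι → ℂ)) (x : ι → ℂ) : Prop :=
  ((Module.finrank ℂ (tangentSpace X x) : ℕ∞) : WithBot ℕ∞) = zLocalDim X x

/-- The affine cone over the singular locus of the projective variety whose affine cone is `X`: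
the nonzero points of `X` that are not smooth points. -/
def projSingCone {ι : Type*} [Fintype ι] (X : Set (ι → ℂ)) : Set (ι → ℂ) :=
  {x | x ∈ X ∧ x ≠ 0 ∧ ¬ smoothAt X x}

/-- The affine cone over the (reduced) singular locus of the Kalman variety of the projective
variety with affine cone `X`. -/
def singKalmanCone {n : ℕ} (X : Set (Fin n → ℂ)) : Set (MatSpace n) :=
  zClosure (projSingCone (zClosure (kalmanCone X)))



/-! ## The spaces `ℙ_s = ℙ^{n²-1} × (ℙ^{n-1})^s` (as multicones) -/

/-- Coordinates for the multicone over `ℙ^{n²-1} × (ℙ^{n-1})^{×s}`. -/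
abbrev MIdx (n s : ℕ) := (Fin n × Fin n) ⊕ (Fin s × Fin n)

/-- The matrix component of a point of the multicone. -/
def matPart {n s : ℕ} (x : MIdx n s → ℂ) : MatSpace n := fun ij => x (Sum.inl ij)

/-- The `i`-th vector component of a point of the multicone. -/
def vecPart {n s : ℕ} (x : MIdx n s → ℂ) (i : Fin s) : Fin n → ℂ := fun k => x (Sum.inr (i, k))

/-- A partition of `{1, …, s}` into `k` (indexed) nonempty pairwise disjoint blocks. -/
structure IdxPartition (s k : ℕ) where
  block : Fin k → Finset (Fin s)
  nonempty : ∀ i, (block i).Nonempty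
  disj : ∀ i j, i ≠ j → Disjoint (block i) (block j)
  cover : ∀ p : Fin s, ∃ i, p ∈ block i

/-- The minimal representative of the `i`-th block. -/
def IdxPartition.rep {s k : ℕ} (P : IdxPartition s k) (i : Fin k) : Fin s :=
  (P.block i).min' (P.nonempty i)

/-- The finest partition, all of whose blocks are singletons. -/
def singletonPartition (s : ℕ) : IdxPartition s s where
  block i := {i}
  nonempty i := ⟨i, by simp⟩
  disj i j h := Finset.disjoint_singleton.2 h
  cover p := ⟨p, by simp⟩

/-- A tuple of nonzero vectors is `P`-compatible: vectors within each block of `P` are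
proportional, and representatives of the distinct blocks are linearly independent. -/
def PCompatible {n s k : ℕ} (P : IdxPartition s k) (v : Fin s → Fin n → ℂ) : Prop :=
  (∀ p, v p ≠ 0) ∧
  (∀ i, ∀ p ∈ P.block i, ∀ q ∈ P.block i, ∃ c : ℂ, v p = c • v q) ∧
  (∀ r : Fin k → Fin s, (∀ i, r i ∈ P.block i) → LinearIndependent ℂ (fun i => v (r i)))

/-- The multicone over `W_s`: tuples `(A, v_1, …, v_s)` where each `v_i` is an eigenvector of
the (nonzero) matrix `A`. -/
def Wcone (n s : ℕ) : Set (MIdx n s → ℂ) :=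
  {x | matPart x ≠ 0 ∧ ∀ i, IsEigenvector (toMat (matPart x)) (vecPart x i)}

/-- The multicone over `W_{s,P}`: the Zariski closure of the set of tuples in `W_s` whose
vector part is `P`-compatible. -/
def WsPcone (n : ℕ) {s k : ℕ} (P : IdxPartition s k) : Set (MIdx n s → ℂ) :=
  zClosure {x | x ∈ Wcone n s ∧ PCompatible P (fun i => vecPart x i)}

/-! ## Multidegrees -/

/-- Parameter space for a multiprojective slice of multidegree type `γ`. -/
abbrev MSliceParam (n s : ℕ) (γ : Fin (s + 1) → ℕ) : Type :=
  (Fin (n ^ 2 - γ 0) × Option (Fin n × Fin n)) ⊕ ((Σ j : Fin s, Fin (n - γ j.succ)) × Option (Fin n))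

/-- The multiprojective affine-linear slice with parameters `a`: it cuts the matrix factor by
`n² - γ 0` affine-linear equations and the `j`-th vector factor by `n - γ (j+1)` affine-linear
equations. -/
def mSlice {n s : ℕ} (γ : Fin (s + 1) → ℕ) (a : MSliceParam n s γ → ℂ) :
    Set (MIdx n s → ℂ) :=
  {x | (∀ r : Fin (n ^ 2 - γ 0),
          a (Sum.inl (r, none)) +
            ∑ ij : Fin n × Fin n, a (Sum.inl (r, some ij)) * x (Sum.inl ij) = 0) ∧
       (∀ j : Fin s, ∀ r : Fin (n - γ j.succ),
          a (Sum.inr (⟨j, r⟩, none)) +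
            ∑ k : Fin n, a (Sum.inr (⟨j, r⟩, some k)) * x (Sum.inr (j, k)) = 0)}

/-- `hasMD W γ δ` : the coefficient of the monomial `h_0^{γ 0} h_1^{γ 1} ⋯ h_s^{γ s}` in the
Chow class of the multiprojective variety with multicone `W ⊆ ℂ^{n²} × (ℂ^n)^s` equals `δ`:
a generic multiprojective slice of type `γ` meets `W` in exactly `δ` points. -/
def hasMD {n s : ℕ} (W : Set (MIdx n s → ℂ)) (γ : Fin (s + 1) → ℕ) (δ : ℕ) : Prop :=
  ∃ U : Set (MSliceParam n s γ → ℂ), zOpen U ∧ zDense U ∧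
    ∀ a ∈ U, (W ∩ mSlice γ a).ncard = δ

/-- The exponent vector of the monomial `h_0 · h_1^{n-1} ⋯ h_i^{n-2} ⋯ h_s^{n-1}`. -/
def specialExp (n s : ℕ) (i : Fin s) : Fin (s + 1) → ℕ :=
  fun j => if j = 0 then 1 else if j = i.succ then n - 2 else n - 1

/-- `γ` lies in the box of admissible exponents of the Chow ring of `ℙ^{n²-1} × (ℙ^{n-1})^s`. -/
def inBox (n s : ℕ) (γ : Fin (s + 1) → ℕ) : Prop :=
  γ 0 < n ^ 2 ∧ ∀ j : Fin s, γ j.succ < n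

/-- `representsClass W c q` : the polynomial `q` represents the Chow class of the
multiprojective variety with multicone `W`, of codimension `c`: its coefficients in the
admissible box in degree `c` are the multidegrees of `W`, and all other coefficients vanish. -/
def representsClass {n s : ℕ} (W : Set (MIdx n s → ℂ)) (c : ℕ)
    (q : MvPolynomial (Fin (s + 1)) ℤ) : Prop :=
  (∀ γ : Fin (s + 1) → ℕ, inBox n s γ → (∑ j, γ j) = c →
      ∃ δ : ℕ, q.coeff (Finsupp.equivFunOnFinite.symm γ) = (δ : ℤ) ∧ hasMD W γ δ) ∧
  (∀ γ : Fin (s + 1) → ℕ, ¬ (inBox n s γ ∧ (∑ j, γ j) = c) →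
      q.coeff (Finsupp.equivFunOnFinite.symm γ) = 0)

/-! ## The Chow ring of `ℙ^{n²-1} × (ℙ^{n-1})^s` -/

/-- The defining ideal of the Chow ring `ℤ[h_0, …, h_s]/(h_0^{n²}, h_1^n, …, h_s^n)`. -/
def chowIdeal (n s : ℕ) : Ideal (MvPolynomial (Fin (s + 1)) ℤ) :=
  Ideal.span ({MvPolynomial.X 0 ^ n ^ 2} ∪
    Set.range fun j : Fin s => MvPolynomial.X j.succ ^ n)

/-- The Chow ring `A^*(ℙ_s) = ℤ[h_0, …, h_s]/(h_0^{n²}, h_1^n, …, h_s^n)`. -/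
abbrev ChowRing (n s : ℕ) := MvPolynomial (Fin (s + 1)) ℤ ⧸ chowIdeal n s

/-- The variable substitution `h_0 ↦ t_0`, `h_i ↦ t_{q_i}` underlying `φ_P`. -/
def blockVarMap {s k : ℕ} (P : IdxPartition s k) : Fin (k + 1) → Fin (s + 1) :=
  Fin.cases 0 fun i => (P.rep i).succ

lemma phiP_aux {n s k : ℕ} (P : IdxPartition s k) :
    ∀ a ∈ chowIdeal n k,
      ((Ideal.Quotient.mk (chowIdeal n s)).comp
        (MvPolynomial.rename (R := ℤ) (blockVarMap P)).toRingHom) a = 0 := by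
  intro a ha
  rw [RingHom.comp_apply, Ideal.Quotient.eq_zero_iff_mem]
  have hmap : (MvPolynomial.rename (R := ℤ) (blockVarMap P)).toRingHom a ∈
      Ideal.map (MvPolynomial.rename (R := ℤ) (blockVarMap P)).toRingHom
        (chowIdeal n k) :=
    Ideal.mem_map_of_mem _ ha
  have hle : Ideal.map
      (MvPolynomial.rename (R := ℤ) (blockVarMap P)).toRingHom
      (chowIdeal n k) ≤ chowIdeal n s := by
    rw [chowIdeal, Ideal.map_span, Ideal.span_le]
    rintro q ⟨p, hp, rfl⟩
    rcases hp with hp | ⟨j, rfl⟩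
    · rw [Set.mem_singleton_iff] at hp
      subst hp
      simp only [AlgHom.toRingHom_eq_coe, RingHom.coe_coe, map_pow, MvPolynomial.rename_X,
        Fin.cases_zero]
      exact Ideal.subset_span (Or.inl rfl)
    · simp only [AlgHom.toRingHom_eq_coe, RingHom.coe_coe, map_pow, MvPolynomial.rename_X,
        Fin.cases_succ]
      exact Ideal.subset_span (Or.inr ⟨P.rep j, rfl⟩)
  exact hle hmap

/-- The ring map `φ_P : A^*(ℙ_k) → A^*(ℙ_s)` sending `h_0 ↦ t_0` and `h_i ↦ t_{q_i}`. -/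
def phiP (n : ℕ) {s k : ℕ} (P : IdxPartition s k) : ChowRing n k →+* ChowRing n s :=
  Ideal.Quotient.lift (chowIdeal n k)
    ((Ideal.Quotient.mk (chowIdeal n s)).comp
      (MvPolynomial.rename (R := ℤ) (blockVarMap P)).toRingHom)
    (phiP_aux P)



/-! ## Discriminants of characteristic polynomials -/

/-- `∏_{i<j} (l i - l j)^2` for a list `l`. -/
def listPairProdSq (l : List ℂ) : ℂ :=
  ∏ p ∈ Finset.univ.filter (fun p : Fin l.length × Fin l.length => p.1 < p.2),
    (l.get p.1 - l.get p.2) ^ 2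

/-- The product of the squared differences of all pairs of elements of a multiset; applied to
the multiset of roots of a characteristic polynomial this is the discriminant. -/
def pairProdSq (m : Multiset ℂ) : ℂ := listPairProdSq m.toList

/-- The coordinate vector (for the action of the symmetric power `ρ_d`) of the symmetric
product `v_1 ⋯ v_d` of the vectors `v i`: its `σ`-th coordinate is the coefficient of
`t_1 ⋯ t_d` in `∏_k (∑_i t_i v i k)^{σ_k}`. -/
def symProdVec {n d : ℕ} (v : Fin d → Fin n → ℂ) : MonIdx n d → ℂ := fun σ =>
  MvPolynomial.coeff (Finsupp.equivFunOnFinite.symm fun _ : Fin d => 1)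
    (∏ k : Fin n, (∑ i : Fin d, MvPolynomial.C (v i k) * MvPolynomial.X i) ^ (monExp σ k))

section
lemma zTop_basis (ι : Type*) : @TopologicalSpace.IsTopologicalBasis _ (zTop ι)
    {U | ∃ p : MvPolynomial ι ℂ, U = {x | MvPolynomial.eval x p ≠ 0}} := by
  let _ := zTop ι
  refine ⟨?_, ?_, rfl⟩
  · rintro _ ⟨p, rfl⟩ _ ⟨q, rfl⟩ x hx
    refine ⟨_, ⟨p * q, rfl⟩, ?_, ?_⟩
    · simpa using hx
    · intro y hy
      simpa using hy
  · refine Set.eq_univ_of_forall fun x => ?_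
    exact ⟨_, ⟨1, rfl⟩, by simp⟩

lemma zOpen_exists {ι : Type*} {U : Set (ι → ℂ)} (hU : zOpen U) {x : ι → ℂ} (hx : x ∈ U) :
    ∃ h : MvPolynomial ι ℂ, MvPolynomial.eval x h ≠ 0 ∧
      ∀ y, MvPolynomial.eval y h ≠ 0 → y ∈ U := by
  let _ := zTop ι
  obtain ⟨_, ⟨p, rfl⟩, h1, h2⟩ := (zTop_basis ι).exists_subset_of_mem_open hx hU
  exact ⟨p, h1, fun y hy => h2 hy⟩

lemma zOpen_basic {ι : Type*} (p : MvPolynomial ι ℂ) :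
    zOpen {x | MvPolynomial.eval x p ≠ 0} := by
  let _ := zTop ι
  exact (zTop_basis ι).isOpen ⟨p, rfl⟩

lemma zClosed_vanish {ι : Type*} (S : Set (MvPolynomial ι ℂ)) :
    zClosed {x | ∀ p ∈ S, MvPolynomial.eval x p = 0} := by
  let _ := zTop ι
  have : {x : ι → ℂ | ∀ p ∈ S, MvPolynomial.eval x p = 0} =
      ⋂ p ∈ S, {x | MvPolynomial.eval x p = 0} := by ext; simp
  change IsClosed _
  rw [this]
  refine isClosed_biInter fun p _ => ?_
  rw [← isOpen_compl_iff]
  exact zOpen_basic p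

lemma mem_zClosure_iff {ι : Type*} (S : Set (ι → ℂ)) (x : ι → ℂ) :
    x ∈ zClosure S ↔ ∀ p : MvPolynomial ι ℂ, (∀ y ∈ S, MvPolynomial.eval y p = 0) →
      MvPolynomial.eval x p = 0 := by
  let _ := zTop ι
  constructor
  · intro hx p hp
    have : zClosure S ⊆ {x | ∀ q ∈ ({p} : Set (MvPolynomial ι ℂ)), MvPolynomial.eval x q = 0} :=
      closure_minimal (fun y hy => by simpa using hp y hy) (zClosed_vanish _)
    simpa using this hx
  · intro h
    by_contra hx
    obtain ⟨q, hq, hq2⟩ := zOpen_exists (U := (zClosure S)ᶜ)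
      (isClosed_closure.isOpen_compl) hx
    refine hq (h q fun y hy => ?_)
    by_contra hne
    exact hq2 y hne (subset_closure hy)

/-- membership in the ideal via vanishing -/
lemma mem_prime_of_vanish {ι : Type*} [Finite ι] (P : Ideal (MvPolynomial ι ℂ)) [P.IsPrime]
    (q : MvPolynomial ι ℂ)
    (h : ∀ x, (∀ p ∈ P, MvPolynomial.eval x p = 0) → MvPolynomial.eval x q = 0) : q ∈ P := by
  rw [← MvPolynomial.IsPrime.vanishingIdeal_zeroLocus (K := ℂ) P]
  rw [MvPolynomial.mem_vanishingIdeal_iff]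
  intro x hx
  rw [MvPolynomial.aeval_eq_eval]
  refine h x fun p hp => ?_
  have := hx p hp
  rwa [MvPolynomial.aeval_eq_eval] at this

/-- the maximal ideal of a point -/
def ptIdeal {ι : Type*} (x : ι → ℂ) : Ideal (MvPolynomial ι ℂ) := RingHom.ker (MvPolynomial.eval x)

instance {ι : Type*} (x : ι → ℂ) : (ptIdeal x).IsPrime := RingHom.ker_isPrime _

lemma height_ptIdeal {ι : Type*} [Fintype ι] (x : ι → ℂ) :
    (ptIdeal x).height = (Fintype.card ι : ℕ∞) := by
  -- all point ideals have the same height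
  have key : ∀ y z : ι → ℂ, (ptIdeal y).height ≤ (ptIdeal z).height := by
    intro y z
    let e (c : ι → ℂ) : MvPolynomial ι ℂ →ₐ[ℂ] MvPolynomial ι ℂ :=
      MvPolynomial.aeval fun i => MvPolynomial.X i + MvPolynomial.C (c i)
    have hcomp : ∀ c, (e c).comp (e (-c)) = AlgHom.id ℂ _ := by
      intro c
      ext i
      simp [e, MvPolynomial.algebraMap_eq]
    let E : MvPolynomial ι ℂ ≃ₐ[ℂ] MvPolynomial ι ℂ :=
      AlgEquiv.ofAlgHom (e (z - y)) (e (-(z - y))) (hcomp _) (by simpa using hcomp (-(z - y)))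
    have : (ptIdeal y) = (ptIdeal z).comap (E.symm.toRingEquiv) := by
      ext p
      simp only [ptIdeal, RingHom.mem_ker, Ideal.mem_comap]
      have : MvPolynomial.eval z (E.symm p) = MvPolynomial.eval y p := by
        change MvPolynomial.eval z (MvPolynomial.aeval _ p) = _
        rw [← MvPolynomial.aeval_eq_eval, ← MvPolynomial.aeval_eq_eval]
        change MvPolynomial.aeval z (MvPolynomial.aeval _ p) = MvPolynomial.aeval y p
        rw [← AlgHom.comp_apply]
        congr 1
        ext i
        simp
      rw [← this]; rfl
    rw [this, RingEquiv.height_comap]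
  have hR : ringKrullDim (MvPolynomial ι ℂ) = (Fintype.card ι : ℕ∞) := by
    rw [MvPolynomial.ringKrullDim_of_isNoetherianRing]
    simp
  apply le_antisymm
  · have := Ideal.height_le_ringKrullDim_of_ne_top (I := ptIdeal x) Ideal.IsPrime.ne_top'
    rw [hR] at this
    exact_mod_cast this
  · have : ringKrullDim (MvPolynomial ι ℂ) ≤ ((ptIdeal x).height : WithBot ℕ∞) := by
      rw [ringKrullDim_le_iff_isMaximal_height_le]
      intro m hm
      obtain ⟨y, rfl⟩ := MvPolynomial.eq_vanishingIdeal_singleton_of_isMaximal ℂ hm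
      have : MvPolynomial.vanishingIdeal ℂ {y} = ptIdeal y := by
        ext p; simp [ptIdeal, MvPolynomial.mem_vanishingIdeal_iff, MvPolynomial.aeval_eq_eval]
      rw [this]
      exact_mod_cast key y x
    rw [hR] at this
    exact_mod_cast this

end

section
lemma zDim_le_of_subset {ι : Type*} [Fintype ι] (T : Set (ι → ℂ)) (p : MvPolynomial ι ℂ)
    (hp : p ≠ 0) (hT : ∀ x ∈ T, MvPolynomial.eval x p = 0) :
    zDim T + 1 ≤ ((Fintype.card ι : ℕ∞) : WithBot ℕ∞) := by
  let _ := zTop ι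
  have hR : ringKrullDim (MvPolynomial ι ℂ) = (Fintype.card ι : ℕ∞) := by
    rw [MvPolynomial.ringKrullDim_of_isNoetherianRing]
    simp
  rw [← hR]
  refine le_trans ?_ (ringKrullDim_quotient_succ_le_of_nonZeroDivisor (r := p)
    (mem_nonZeroDivisors_of_ne_zero hp))
  gcongr
  rw [ringKrullDim_quotient, ← Order.krullDim_orderDual]
  change Order.krullDim (TopologicalSpace.IrreducibleCloseds T) ≤ _
  have hprime : ∀ Z : TopologicalSpace.IrreducibleCloseds T,
      (vanishingIdealOf (Subtype.val '' (Z : Set T))).IsPrime := by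
    intro Z
    have hZ : IsIrreducible (Subtype.val '' (Z : Set T)) :=
      Z.isIrreducible.image _ continuous_subtype_val.continuousOn
    refine ⟨?_, ?_⟩
    · intro h
      obtain ⟨x, hx⟩ := hZ.1
      have : (1 : MvPolynomial ι ℂ) ∈ vanishingIdealOf (Subtype.val '' (Z : Set T)) := by
        rw [h]; trivial
      simpa using this x hx
    · intro a b hab
      by_contra hcon
      push Not at hcon
      obtain ⟨ha, hb⟩ := hcon
      have ha' : ∃ x ∈ Subtype.val '' (Z : Set T), MvPolynomial.eval x a ≠ 0 := by
        by_contra hh; push Not at hh; exact ha hh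
      have hb' : ∃ x ∈ Subtype.val '' (Z : Set T), MvPolynomial.eval x b ≠ 0 := by
        by_contra hh; push Not at hh; exact hb hh
      obtain ⟨x, hx, hxa⟩ := ha'
      obtain ⟨y, hy, hyb⟩ := hb'
      obtain ⟨z, hz, h1, h2⟩ := hZ.2 _ _ (zOpen_basic a) (zOpen_basic b) ⟨x, hx, hxa⟩ ⟨y, hy, hyb⟩
      have := hab z hz
      rw [map_mul] at this
      exact mul_ne_zero h1 h2 this
  let Φ : TopologicalSpace.IrreducibleCloseds T →
      (PrimeSpectrum.zeroLocus (R := MvPolynomial ι ℂ) (Ideal.span {p} : Ideal _))ᵒᵈ :=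
    fun Z => OrderDual.toDual ⟨⟨_, hprime Z⟩, by
      rw [PrimeSpectrum.mem_zeroLocus]
      change Ideal.span {p} ≤ vanishingIdealOf _
      rw [Ideal.span_singleton_le_iff_mem]
      rintro _ ⟨x, hx, rfl⟩
      exact hT _ x.2⟩
  refine Order.krullDim_le_of_strictMono Φ ?_
  intro Z Z' hlt
  have hle : (Z : Set T) ⊆ Z' := hlt.le
  rw [lt_iff_le_and_ne]
  constructor
  · change vanishingIdealOf (Subtype.val '' (Z' : Set T)) ≤ vanishingIdealOf (Subtype.val '' (Z : Set T))
    intro q hq x hx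
    exact hq x (Set.image_mono hle hx)
  · intro heq
    have heq' : vanishingIdealOf (Subtype.val '' (Z : Set T)) =
        vanishingIdealOf (Subtype.val '' (Z' : Set T)) := by
      have := congrArg (fun t => (OrderDual.ofDual t).1.asIdeal) heq
      exact this
    apply hlt.not_ge
    change (Z' : Set T) ⊆ Z
    intro x hx
    by_contra hxZ
    obtain ⟨C, hC, hCZ⟩ := isClosed_induced_iff.1 Z.isClosed'
    have hCZ' : ∀ y : T, y.1 ∈ C ↔ y ∈ Z := fun y => by
      change _ ↔ y ∈ Z.carrier
      rw [← hCZ]; rfl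
    obtain ⟨q, hq1, hq2⟩ := zOpen_exists (U := Cᶜ) hC.isOpen_compl
      (x := x.1) (fun h => hxZ ((hCZ' x).1 h))
    have : q ∈ vanishingIdealOf (Subtype.val '' (Z : Set T)) := by
      rintro _ ⟨y, hy, rfl⟩
      by_contra hne
      exact hq2 _ hne ((hCZ' y).2 hy)
    rw [heq'] at this
    exact hq1 (this _ ⟨x, hx, rfl⟩)

lemma zDim_ge {ι : Type*} [Fintype ι] (T : Set (ι → ℂ)) (p : MvPolynomial ι ℂ) (a : ι → ℂ)
    (ha : MvPolynomial.eval a p = 0) (U : Set (ι → ℂ)) (hU : zOpen U) (haU : a ∈ U)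
    (hT : ∀ x, MvPolynomial.eval x p = 0 → x ∈ T) :
    ((Fintype.card ι : ℕ∞) : WithBot ℕ∞) ≤ zDim (T ∩ U) + 1 := by
  let _ := zTop ι
  have h1 := Ideal.height_le_height_add_one_of_mem (r := p) (p := ptIdeal a) ha
  rw [height_ptIdeal] at h1
  have hle : Ideal.span {p} ≤ ptIdeal a := by
    rw [Ideal.span_singleton_le_iff_mem]; exact ha
  have hpr : ((ptIdeal a).map (Ideal.Quotient.mk (Ideal.span {p}))).IsPrime :=
    Ideal.isPrime_map_quotientMk_of_isPrime hle
  let m : PrimeSpectrum (MvPolynomial ι ℂ ⧸ Ideal.span {p}) := ⟨_, hpr⟩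
  have h2 : ((((ptIdeal a).map (Ideal.Quotient.mk (Ideal.span {p}))).height : ℕ∞) : WithBot ℕ∞)
      ≤ zDim (T ∩ U) := by
    change ((m.asIdeal.height : ℕ∞) : WithBot ℕ∞) ≤ _
    rw [PrimeSpectrum.height_eq_orderHeight, Order.height_eq_krullDim_Iic, ← Order.krullDim_orderDual]
    change _ ≤ Order.krullDim (TopologicalSpace.IrreducibleCloseds ↥(T ∩ U))
    let V : PrimeSpectrum (MvPolynomial ι ℂ ⧸ Ideal.span {p}) → Set (ι → ℂ) := fun Q =>
      {x | ∀ q ∈ Q.asIdeal.comap (Ideal.Quotient.mk (Ideal.span {p})), MvPolynomial.eval x q = 0}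
    have hVp : ∀ Q, ∀ x ∈ V Q, MvPolynomial.eval x p = 0 := by
      intro Q x hx
      apply hx p
      rw [Ideal.mem_comap, Ideal.Quotient.eq_zero_iff_mem.2 (Ideal.mem_span_singleton_self p)]
      exact Q.asIdeal.zero_mem
    have haV : ∀ Q ≤ m, a ∈ V Q := by
      intro Q hQ q hq
      have hq' : Ideal.Quotient.mk (Ideal.span {p}) q ∈ m.asIdeal := hQ hq
      have : q ∈ (m.asIdeal).comap (Ideal.Quotient.mk (Ideal.span {p})) := hq'
      have e : (m.asIdeal).comap (Ideal.Quotient.mk (Ideal.span {p})) = ptIdeal a := by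
        change Ideal.comap _ (Ideal.map _ _) = _
        rw [Ideal.comap_map_of_surjective _ Ideal.Quotient.mk_surjective]
        rw [← RingHom.ker_eq_comap_bot, Ideal.mk_ker]
        exact sup_eq_left.2 hle
      rw [e] at this
      exact this
    -- vanishing on an open part
    have hvan : ∀ Q ≤ m, ∀ h : MvPolynomial ι ℂ, MvPolynomial.eval a h ≠ 0 →
        ∀ q : MvPolynomial ι ℂ, (∀ x ∈ V Q, MvPolynomial.eval x h ≠ 0 → MvPolynomial.eval x q = 0) →
        q ∈ Q.asIdeal.comap (Ideal.Quotient.mk (Ideal.span {p})) := by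
      intro Q hQ h hh q hq
      have : q * h ∈ Q.asIdeal.comap (Ideal.Quotient.mk (Ideal.span {p})) := by
        apply mem_prime_of_vanish
        intro x hx
        by_cases hx0 : MvPolynomial.eval x h = 0
        · simp [hx0]
        · simp [hq x hx hx0]
      rcases (Ideal.IsPrime.mem_or_mem inferInstance this) with h' | h'
      · exact h'
      · exact absurd (haV Q hQ h h') hh
    obtain ⟨g, hg1, hg2⟩ := zOpen_exists hU haU
    let Φ : (Set.Iic m)ᵒᵈ → TopologicalSpace.IrreducibleCloseds ↥(T ∩ U) := fun Q =>
      { carrier := Subtype.val ⁻¹' V (OrderDual.ofDual Q).1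
        isClosed' := (zClosed_vanish _).preimage continuous_subtype_val
        isIrreducible' := by
          obtain ⟨Q, hQ⟩ := OrderDual.ofDual Q
          change IsIrreducible (Subtype.val ⁻¹' V Q)
          refine ⟨⟨⟨a, hT a ha, haU⟩, haV Q hQ⟩, ?_⟩
          rintro O1 O2 hO1 hO2 ⟨x, hx, hx1⟩ ⟨y, hy, hy1⟩
          obtain ⟨O1, hOO1, rfl⟩ := isOpen_induced_iff.1 hO1
          obtain ⟨O2, hOO2, rfl⟩ := isOpen_induced_iff.1 hO2
          obtain ⟨q1, hq1, hq1'⟩ := zOpen_exists (U := O1) hOO1 hx1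
          obtain ⟨q2, hq2, hq2'⟩ := zOpen_exists (U := O2) hOO2 hy1
          by_contra hcon
          have : q1 * q2 ∈ Q.asIdeal.comap (Ideal.Quotient.mk (Ideal.span {p})) := by
            refine hvan Q hQ g hg1 _ ?_
            intro z hz hzg
            by_contra hne
            rw [map_mul, ← ne_eq, mul_ne_zero_iff] at hne
            refine hcon ⟨⟨z, hT z (hVp Q z hz), hg2 z hzg⟩, hz, hq1' z hne.1, hq2' z hne.2⟩
          rcases (Ideal.IsPrime.mem_or_mem inferInstance this) with h' | h'
          · exact hq1 (hx _ h')
          · exact hq2 (hy _ h') }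
    refine Order.krullDim_le_of_strictMono Φ ?_
    intro Q Q' hlt
    obtain ⟨⟨Q, hQ⟩, rfl⟩ := OrderDual.toDual.surjective Q
    obtain ⟨⟨Q', hQ'⟩, rfl⟩ := OrderDual.toDual.surjective Q'
    have hlt' : Q' < Q := hlt
    rw [lt_iff_le_and_ne]
    constructor
    · change (Subtype.val ⁻¹' V Q : Set ↥(T ∩ U)) ⊆ Subtype.val ⁻¹' V Q'
      intro x hx q hq
      exact hx q (hlt'.le hq)
    · intro heq
      have heq' : (Subtype.val ⁻¹' V Q : Set ↥(T ∩ U)) = Subtype.val ⁻¹' V Q' :=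
        congrArg TopologicalSpace.IrreducibleCloseds.carrier heq
      apply hlt'.not_ge
      intro q hq
      obtain ⟨q, rfl⟩ := Ideal.Quotient.mk_surjective q
      refine hvan Q' hQ' g hg1 q ?_
      intro z hz hzg
      have hz' : (⟨z, hT z (hVp Q' z hz), hg2 z hzg⟩ : ↥(T ∩ U)) ∈ (Subtype.val ⁻¹' V Q) := by
        rw [heq']; exact hz
      exact hz' q hq
  calc ((Fintype.card ι : ℕ∞) : WithBot ℕ∞) ≤ _ := WithBot.coe_le_coe.2 h1
    _ ≤ _ := by
      rw [WithBot.coe_add]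
      gcongr
      exact le_refl _

end

section
lemma wb_le_of_add_one {x y : WithBot ℕ∞} (h : x + 1 ≤ y + 1) : x ≤ y := by
  induction x with
  | bot => exact bot_le
  | coe x =>
    induction y with
    | bot => simp at h
    | coe y =>
      have h' : x + 1 ≤ y + 1 := by exact_mod_cast h
      have : x ≤ y := (ENat.add_le_add_iff_right (by simp)).1 h'
      exact_mod_cast this

lemma smoothAt_of_local_hypersurface {ι : Type*} [Fintype ι] (S : Set (ι → ℂ)) (a : ι → ℂ)
    (p D : MvPolynomial ι ℂ) (hpS : ∀ x ∈ S, MvPolynomial.eval x p = 0)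
    (hS : ∀ x, MvPolynomial.eval x p = 0 → MvPolynomial.eval x D ≠ 0 → x ∈ S)
    (ha : MvPolynomial.eval a p = 0) (hD : MvPolynomial.eval a D ≠ 0)
    (B : ι → ℂ) (hB : ∑ i, B i * MvPolynomial.eval a (MvPolynomial.pderiv i p) ≠ 0) :
    smoothAt (zClosure S) a := by
  have hp0 : p ≠ 0 := by
    rintro rfl
    simp at hB
  -- prime factor through the point
  obtain ⟨p0, hp0p, hp0d, hp0a⟩ : ∃ p0 : MvPolynomial ι ℂ, Prime p0 ∧ p0 ∣ p ∧
      MvPolynomial.eval a p0 = 0 := by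
    obtain ⟨s, hs, u, hu⟩ := UniqueFactorizationMonoid.exists_prime_factors p hp0
    have h1 : MvPolynomial.eval a s.prod = 0 := by
      rw [← hu, map_mul] at ha
      rcases mul_eq_zero.1 ha with h | h
      · exact h
      · exact absurd h ((u.isUnit.map (MvPolynomial.eval a)).ne_zero)
    have h2 : s.prod ∈ ptIdeal a := h1
    rw [Ideal.IsPrime.multiset_prod_mem_iff_exists_mem (inferInstance)] at h2
    obtain ⟨q, hq, hqa⟩ := h2
    exact ⟨q, hs q hq, (Multiset.dvd_prod hq).trans ⟨_, hu.symm⟩, hqa⟩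
  obtain ⟨r, rfl⟩ := hp0d
  have hder : ∀ h : MvPolynomial ι ℂ, ∀ w : ι → ℂ,
      ∑ i, w i * MvPolynomial.eval a (MvPolynomial.pderiv i (p0 * h)) =
      MvPolynomial.eval a h * ∑ i, w i * MvPolynomial.eval a (MvPolynomial.pderiv i p0) := by
    intro h w
    rw [Finset.mul_sum]
    refine Finset.sum_congr rfl fun i _ => ?_
    rw [Derivation.leibniz]
    simp [hp0a]
    ring
  have hdvd : ∀ q : MvPolynomial ι ℂ, (∀ x ∈ S, MvPolynomial.eval x q = 0) → p0 ∣ q := by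
    intro q hq
    have hprime : (Ideal.span {p0}).IsPrime :=
      (Ideal.span_singleton_prime hp0p.ne_zero).2 hp0p
    have : q * D ∈ Ideal.span {p0} := by
      apply mem_prime_of_vanish
      intro x hx
      have hx0 := hx p0 (Ideal.mem_span_singleton_self p0)
      by_cases hxD : MvPolynomial.eval x D = 0
      · simp [hxD]
      · rw [map_mul, hq x (hS x (by simp [hx0]) hxD), zero_mul]
    rcases hprime.mem_or_mem this with h | h
    · exact Ideal.mem_span_singleton.1 h
    · obtain ⟨c, rfl⟩ := Ideal.mem_span_singleton.1 h
      simp [hp0a] at hD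
  have hSclo : ∀ x ∈ S, x ∈ zClosure S := fun x hx => by
    rw [mem_zClosure_iff]; intro q hq; exact hq x hx
  let L : (ι → ℂ) →ₗ[ℂ] ℂ :=
    { toFun := fun u => ∑ i, u i * MvPolynomial.eval a (MvPolynomial.pderiv i p0)
      map_add' := by intro x y; simp [add_mul, Finset.sum_add_distrib]
      map_smul' := by intro c x; simp [Finset.mul_sum, mul_assoc] }
  rw [hder] at hB
  have hrL := mul_ne_zero_iff.1 hB
  have hL : L ≠ 0 := by
    intro h
    exact hrL.2 (show L B = 0 by rw [h]; rfl)
  have htan : tangentSpace (zClosure S) a = LinearMap.ker L := by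
    ext u
    rw [LinearMap.mem_ker]
    constructor
    · intro hu
      have := hu (p0 * r) (fun y hy => (mem_zClosure_iff S y).1 hy _ hpS)
      rw [hder] at this
      exact (mul_eq_zero.1 this).resolve_left hrL.1
    · intro hu q hq
      obtain ⟨h, rfl⟩ := hdvd q (fun x hx => hq x (hSclo x hx))
      rw [hder]
      have : ∑ i, u i * MvPolynomial.eval a (MvPolynomial.pderiv i p0) = 0 := hu
      rw [this, mul_zero]
  have hfr := Module.Dual.finrank_ker_add_one_of_ne_zero (f := L) hL
  rw [Module.finrank_fintype_fun_eq_card] at hfr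
  unfold smoothAt
  rw [htan]
  apply le_antisymm
  · unfold zLocalDim
    refine le_iInf fun U => le_iInf fun hU => le_iInf fun haU => ?_
    have h := zDim_ge (zClosure S) p0 a hp0a U hU haU (fun x hx => by
      rw [mem_zClosure_iff]
      intro q hq
      obtain ⟨h, rfl⟩ := hdvd q hq
      simp [hx])
    rw [← hfr] at h
    push_cast at h
    exact wb_le_of_add_one h
  · have h1 : zLocalDim (zClosure S) a ≤ zDim (zClosure S) := by
      unfold zLocalDim
      refine (iInf_le _ Set.univ).trans ?_
      refine (iInf_le _ (show zOpen Set.univ from ?_)).trans ?_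
      · let _ := zTop ι
        exact isOpen_univ
      refine (iInf_le _ trivial).trans ?_
      rw [Set.inter_univ]
    refine h1.trans ?_
    have h := zDim_le_of_subset (zClosure S) (p0 * r) hp0
      (fun y hy => (mem_zClosure_iff S y).1 hy _ hpS)
    rw [← hfr] at h
    push_cast at h
    exact wb_le_of_add_one h

end

section
open MvPolynomial

lemma minors_vanish {m : Type*} [Fintype m] (M : Matrix m m ℂ) (z1 z2 : m → ℂ)
    (hind : ∀ α β : ℂ, α • z1 + β • z2 = 0 → α = 0 ∧ β = 0)
    (h1 : M.mulVec z1 = 0) (h2 : M.mulVec z2 = 0)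
    (e₁ e₂ : Fin (Fintype.card m - 1) → m) (he₂ : Function.Injective e₂) :
    (Matrix.of fun i j => M (e₁ i) (e₂ j)).det = 0 := by
  classical
  -- a nonzero kernel vector supported on the range of e₂
  obtain ⟨z, hz, hMz, hsupp⟩ : ∃ z : m → ℂ, z ≠ 0 ∧ M.mulVec z = 0 ∧
      ∀ τ, τ ∉ Set.range e₂ → z τ = 0 := by
    have hcard : ∀ τ τ', τ ∉ Set.range e₂ → τ' ∉ Set.range e₂ → τ = τ' := by
      intro τ τ' h h'
      have hc : (Finset.univ.image e₂)ᶜ.card ≤ 1 := by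
        rw [Finset.card_compl, Finset.card_image_of_injective _ he₂, Finset.card_univ,
          Fintype.card_fin]
        omega
      rw [Finset.card_le_one] at hc
      refine hc τ ?_ τ' ?_
      · simpa using h
      · simpa using h'
    by_cases hex : ∃ τ, τ ∉ Set.range e₂
    · obtain ⟨τ, hτ⟩ := hex
      by_cases hz1 : z1 τ = 0
      · refine ⟨z1, ?_, h1, fun τ' h' => by rw [hcard τ' τ h' hτ, hz1]⟩
        rintro rfl
        have := (hind 1 0 (by simp)).1
        norm_num at this
      · refine ⟨(z2 τ) • z1 + (- z1 τ) • z2, ?_, ?_, ?_⟩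
        · intro h
          exact hz1 (neg_eq_zero.1 (hind _ _ h).2)
        · rw [Matrix.mulVec_add, Matrix.mulVec_smul, Matrix.mulVec_smul, h1, h2]; simp
        · intro τ' h'
          rw [hcard τ' τ h' hτ]
          simp [mul_comm]
    · push Not at hex
      refine ⟨z1, ?_, h1, fun τ' h' => absurd (hex τ') h'⟩
      rintro rfl
      have := (hind 1 0 (by simp)).1
      norm_num at this
  rw [← Matrix.exists_mulVec_eq_zero_iff]
  refine ⟨z ∘ e₂, ?_, ?_⟩
  · intro h
    apply hz
    ext τ
    by_cases hτ : τ ∈ Set.range e₂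
    · obtain ⟨j, rfl⟩ := hτ
      exact congrFun h j
    · exact hsupp τ hτ
  · ext i
    have := congrFun hMz (e₁ i)
    simp only [Matrix.mulVec, dotProduct, Pi.zero_apply, Matrix.of_apply, Function.comp] at this ⊢
    rw [← this, ← Finset.sum_image (s := Finset.univ) (g := e₂)
      (f := fun τ => M (e₁ i) τ * z τ) (fun a _ b _ h => he₂ h)]
    refine Finset.sum_subset (Finset.subset_univ _) ?_
    intro τ _ hτ
    rw [hsupp τ (by simpa using hτ), mul_zero]

/-- vector of monomials -/
def monVec {S : Type*} [CommRing S] {n : ℕ} (d : ℕ) (v : Fin n → S) : MonIdx n d → S :=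
  fun σ => ∏ j, v j ^ (monExp σ j)

lemma monExp_injective {n d : ℕ} : Function.Injective (monExp : MonIdx n d → (Fin n →₀ ℕ)) := by
  intro σ τ h
  apply Sym.coe_injective
  exact Multiset.toFinsupp.injective h

lemma monExp_degree {n d : ℕ} (σ : MonIdx n d) : (monExp σ).degree = d := by
  unfold monExp
  rw [Finsupp.degree_eq_sum]
  have := Multiset.toFinset_sum_count_eq (σ : Multiset (Fin n))
  rw [Sym.card_coe] at this
  refine Eq.trans ?_ this
  simp only [Multiset.toFinsupp_apply]
  symm
  refine Finset.sum_subset (Finset.subset_univ _) ?_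
  intro x _ hx
  rw [Multiset.count_eq_zero]
  simpa using hx

lemma monExp_surj {n d : ℕ} (s : Fin n →₀ ℕ) (hs : s.degree = d) :
    ∃ σ : MonIdx n d, monExp σ = s := by
  subst hs
  refine ⟨⟨Finsupp.toMultiset s, ?_⟩, ?_⟩
  · rw [Finsupp.card_toMultiset, Finsupp.degree_eq_sum, Finsupp.sum_fintype _ _ (fun _ => rfl)]
    simp
  · simp [monExp]

lemma pairing {S : Type*} [CommRing S] {R : Type*} [CommRing R] (φ : R →+* S) {n d : ℕ}
    (g : MvPolynomial (Fin n) R)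
    (hg : g.IsHomogeneous d) (v : Fin n → S) :
    ∑ σ : MonIdx n d, φ (coeff (monExp σ) g) * monVec d v σ = eval₂ φ v g := by
  classical
  rw [eval₂_eq']
  unfold monVec
  rw [← Finset.sum_image (s := Finset.univ) (g := monExp)
    (f := fun s : Fin n →₀ ℕ => φ (coeff s g) * ∏ j, v j ^ s j)
    (fun a _ b _ h => monExp_injective h)]
  symm
  refine Finset.sum_subset ?_ ?_
  · intro s hs
    have : s.degree = d := by
      have := hg (mem_support_iff.1 hs)
      rw [← this, Finsupp.degree_eq_weight_one]
      try rfl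
    obtain ⟨σ, rfl⟩ := monExp_surj s this
    simp
  · intro s _ hs
    rw [notMem_support_iff.1 hs]
    simp

lemma symPow_mulVec {S : Type*} [CommRing S] {n d : ℕ} (A : Matrix (Fin n) (Fin n) S)
    (v : Fin n → S) : (symPow d A).mulVec (monVec d v) = monVec d (A.mulVec v) := by
  ext τ
  have hh : (∏ j : Fin n, (∑ k : Fin n, C (A j k) * X k) ^ (monExp τ j) :
      MvPolynomial (Fin n) S).IsHomogeneous d := by
    have : ∑ j, 1 * monExp τ j = d := by
      simpa [Finsupp.degree_eq_sum] using monExp_degree τ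
    have h2 : (∏ j : Fin n, (∑ k : Fin n, C (A j k) * X k) ^ (monExp τ j) :
      MvPolynomial (Fin n) S).IsHomogeneous (∑ j, 1 * monExp τ j) := by
      refine IsHomogeneous.prod _ _ _ fun j _ => ?_
      refine IsHomogeneous.pow ?_ _
      refine IsHomogeneous.sum _ _ _ fun k _ => ?_
      simpa using (isHomogeneous_C (Fin n) (A j k)).mul (isHomogeneous_X S k)
    rwa [this] at h2
  have := pairing (RingHom.id S) _ hh v
  simp only [RingHom.id_apply] at this
  simp only [Matrix.mulVec, dotProduct, symPow, Matrix.of_apply]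
  rw [this]
  simp [monVec, Matrix.mulVec, dotProduct]

lemma symPow_pow_mulVec {S : Type*} [CommRing S] {n d : ℕ} (A : Matrix (Fin n) (Fin n) S)
    (i : ℕ) (v : Fin n → S) :
    ((symPow d A) ^ i).mulVec (monVec d v) = monVec d ((A ^ i).mulVec v) := by
  induction i generalizing v with
  | zero => simp
  | succ i ih =>
    rw [pow_succ, ← Matrix.mulVec_mulVec, symPow_mulVec, ih, Matrix.mulVec_mulVec, ← pow_succ]

lemma symPow_map {S T : Type*} [CommRing S] [CommRing T] (φ : S →+* T) {n d : ℕ}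
    (A : Matrix (Fin n) (Fin n) S) : (symPow d A).map φ = symPow d (A.map φ) := by
  ext τ σ
  simp only [symPow, Matrix.map_apply, Matrix.of_apply]
  rw [← coeff_map]
  simp

lemma genMat_map {T : Type*} [CommRing T] (φ : ℂ →+* T) {n : ℕ} (A : MatSpace n) :
    (genMat n).map (φ.comp (eval A)) = (toMat A).map φ := by
  ext i j
  simp [genMat, toMat]

lemma kalman_mulVec {T : Type*} [CommRing T] (φ : ℂ →+* T) {n d : ℕ}
    (f : MvPolynomial (Fin n) ℂ) (hf : f.IsHomogeneous d) (A : MatSpace n) (v : Fin n → T)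
    (σ : MonIdx n d) :
    ∑ τ, φ (eval A (kalmanSq d (coeffVec d f) σ τ)) * monVec d v τ =
      eval₂ φ ((((toMat A).map φ) ^ ((Fintype.equivFin (MonIdx n d)) σ : ℕ)).mulVec v) f := by
  set i := ((Fintype.equivFin (MonIdx n d)) σ : ℕ) with hi
  rw [← pairing φ f hf]
  rw [← symPow_pow_mulVec]
  have hmap : ((symPow d (genMat n)) ^ i).map (φ.comp (eval A)) =
      (symPow d ((toMat A).map φ)) ^ i := by
    have h1 : ((symPow d (genMat n)) ^ i).map (φ.comp (eval A)) =
      ((symPow d (genMat n)).map (φ.comp (eval A))) ^ i :=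
      Matrix.map_pow _ (φ.comp (eval A)) _
    rw [h1, symPow_map, genMat_map]
  rw [← hmap]
  simp only [kalmanSq, Matrix.of_apply, map_sum, map_mul, eval_C, ← hi, Matrix.mulVec, dotProduct,
    Matrix.map_apply, RingHom.comp_apply, Finset.sum_mul, Finset.mul_sum]
  rw [Finset.sum_comm]
  refine Finset.sum_congr rfl fun κ _ => Finset.sum_congr rfl fun τ _ => ?_
  rw [mul_assoc]
  rfl

end

section
open MvPolynomial

/-- directional derivative -/
def gd {ι : Type*} [Fintype ι] (f : MvPolynomial ι ℂ) (v w : ι → ℂ) : ℂ :=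
  ∑ i, w i * eval v (pderiv i f)

lemma gd_add {ι : Type*} [Fintype ι] (f : MvPolynomial ι ℂ) (v w w' : ι → ℂ) :
    gd f v (w + w') = gd f v w + gd f v w' := by
  simp [gd, add_mul, Finset.sum_add_distrib]

lemma gd_smul {ι : Type*} [Fintype ι] (f : MvPolynomial ι ℂ) (v w : ι → ℂ) (c : ℂ) :
    gd f v (c • w) = c * gd f v w := by
  simp [gd, mul_assoc, Finset.mul_sum]

/-- embedding in dual numbers -/
def iE : ℂ →+* DualNumber ℂ := TrivSqZeroExt.inlHom ℂ ℂ

@[simp] lemma iE_fst (c : ℂ) : (iE c).fst = c := rfl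
@[simp] lemma iE_snd (c : ℂ) : (iE c).snd = 0 := rfl

lemma dual_fst {ι : Type*} (f : MvPolynomial ι ℂ) (v : ι → DualNumber ℂ) :
    (eval₂ iE v f).fst = eval (fun i => (v i).fst) f := by
  induction f using MvPolynomial.induction_on with
  | C a => simp
  | add p q hp hq => simp [hp, hq]
  | mul_X p i hp => simp [hp]

lemma dual_snd {ι : Type*} [Fintype ι] (f : MvPolynomial ι ℂ) (v : ι → DualNumber ℂ) :
    (eval₂ iE v f).snd = gd f (fun i => (v i).fst) (fun i => (v i).snd) := by
  classical
  unfold gd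
  induction f using MvPolynomial.induction_on with
  | C a => simp
  | add p q hp hq => simp [hp, hq, mul_add, Finset.sum_add_distrib]
  | mul_X p i hp =>
    simp only [eval₂_mul, eval₂_X, TrivSqZeroExt.snd_mul, hp, dual_fst, Derivation.leibniz,
      pderiv_X, smul_eq_mul, map_add, map_mul, eval_X, mul_add, Finset.sum_add_distrib]
    congr 1
    · rw [Finset.sum_eq_single i]
      · simp [mul_comm]
      · intro j _ hj
        simp [hj.symm]
      · simp
    · simp only [MulOpposite.smul_eq_mul_unop, MulOpposite.unop_op, Finset.sum_mul]
      refine Finset.sum_congr rfl fun j _ => by ring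

lemma poly_chain {ι : Type*} [Fintype ι] (f : MvPolynomial ι ℂ) (y : ι → Polynomial ℂ) (t : ℂ) :
    (Polynomial.derivative (eval₂ Polynomial.C y f)).eval t =
      gd f (fun i => (y i).eval t) (fun i => (Polynomial.derivative (y i)).eval t) := by
  classical
  unfold gd
  have he : ∀ f : MvPolynomial ι ℂ, (eval₂ Polynomial.C y f).eval t =
      eval (fun i => (y i).eval t) f := by
    intro f
    induction f using MvPolynomial.induction_on with
    | C a => simp
    | add p q hp hq => simp [hp, hq]
    | mul_X p i hp => simp [hp]
  induction f using MvPolynomial.induction_on with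
  | C a => simp
  | add p q hp hq => simp [hp, hq, mul_add, Finset.sum_add_distrib]
  | mul_X p i hp =>
    simp only [eval₂_mul, eval₂_X, Polynomial.derivative_mul, Polynomial.eval_add,
      Polynomial.eval_mul, hp, he, Derivation.leibniz,
      pderiv_X, smul_eq_mul, map_add, map_mul, eval_X, mul_add, Finset.sum_add_distrib]
    rw [add_comm]
    congr 1
    · rw [Finset.sum_eq_single i]
      · simp [mul_comm]
      · intro j _ hj
        simp [hj.symm]
      · simp
    · simp only [Finset.sum_mul]
      refine Finset.sum_congr rfl fun j _ => by ring

lemma hom_smul {n d : ℕ} (f : MvPolynomial (Fin n) ℂ) (hf : f.IsHomogeneous d) (c : ℂ)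
    (v : Fin n → ℂ) : eval (c • v) f = c ^ d * eval v f := by
  have h1 := pairing (RingHom.id ℂ) f hf (c • v)
  have h2 := pairing (RingHom.id ℂ) f hf v
  simp only [RingHom.id_apply] at h1 h2
  rw [eval, coe_eval₂Hom, ← h1, eval, coe_eval₂Hom, ← h2, Finset.mul_sum]
  refine Finset.sum_congr rfl fun σ _ => ?_
  have : monVec d (c • v) σ = c ^ d * monVec d v σ := by
    simp only [monVec, Pi.smul_apply, smul_eq_mul, mul_pow, Finset.prod_mul_distrib]
    rw [Finset.prod_pow_eq_pow_sum]
    have := monExp_degree σ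
    rw [Finsupp.degree_eq_sum] at this
    rw [this]
  rw [this]; ring

lemma euler {n d : ℕ} (f : MvPolynomial (Fin n) ℂ) (hf : f.IsHomogeneous d)
    (v : Fin n → ℂ) : gd f v v = d * eval v f := by
  have := congrArg (eval v) hf.sum_X_mul_pderiv
  simpa [gd] using this

lemma gd_smul_left {n d : ℕ} (f : MvPolynomial (Fin n) ℂ) (hf : f.IsHomogeneous d) (c : ℂ)
    (v w : Fin n → ℂ) : gd f (c • v) w = c ^ (d - 1) * gd f v w := by
  unfold gd
  rw [Finset.mul_sum]
  refine Finset.sum_congr rfl fun i _ => ?_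
  rw [hom_smul _ hf.pderiv]; ring

/-- linear form -/
def lf {n : ℕ} (l : Fin n → ℂ) : MvPolynomial (Fin n) ℂ := ∑ i, C (l i) * X i

lemma lf_hom {n : ℕ} (l : Fin n → ℂ) : (lf l).IsHomogeneous 1 := by
  refine IsHomogeneous.sum _ _ _ fun k _ => ?_
  simpa using (isHomogeneous_C (Fin n) (l k)).mul (isHomogeneous_X ℂ k)

lemma lf_eval₂ {n : ℕ} {S : Type*} [CommRing S] (φ : ℂ →+* S) (l : Fin n → ℂ) (v : Fin n → S) :
    eval₂ φ v (lf l) = ∑ i, φ (l i) * v i := by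
  simp [lf, eval₂_sum]

lemma exists_lf {n : ℕ} (v w : Fin n → ℂ) (h : v ∉ Submodule.span ℂ {w}) :
    ∃ l : Fin n → ℂ, l ⬝ᵥ v = 1 ∧ l ⬝ᵥ w = 0 := by
  obtain ⟨φ, h1, h2⟩ := Submodule.exists_dual_map_eq_bot_of_notMem h inferInstance
  have hw : φ w = 0 := by
    have : φ w ∈ (Submodule.span ℂ {w}).map φ :=
      Submodule.mem_map_of_mem (Submodule.mem_span_singleton_self w)
    rw [h2] at this
    simpa using this
  have key : ∀ x, (fun i => φ (Pi.single i 1)) ⬝ᵥ x = φ x := by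
    intro x
    conv_rhs => rw [pi_eq_sum_univ' x]
    simp [dotProduct, mul_comm]
  refine ⟨(φ v)⁻¹ • (fun i => φ (Pi.single i 1)), ?_, ?_⟩
  · rw [smul_dotProduct, key, smul_eq_mul, inv_mul_cancel₀ h1]
  · rw [smul_dotProduct, key, hw, smul_zero]

/-- all submaximal minors vanish -/
def MV {n : ℕ} (d : ℕ) (f : MvPolynomial (Fin n) ℂ) (A : MatSpace n) : Prop :=
  ∀ e₁ e₂ : Fin (Fintype.card (MonIdx n d) - 1) → MonIdx n d,
        Function.Injective e₁ → Function.Injective e₂ →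
        MvPolynomial.eval A
          (Matrix.det (Matrix.of fun i j => kalmanSq d (coeffVec d f) (e₁ i) (e₂ j))) = 0

lemma MV_of {n d : ℕ} (f : MvPolynomial (Fin n) ℂ) (A : MatSpace n) (z1 z2 : MonIdx n d → ℂ)
    (hind : ∀ α β : ℂ, α • z1 + β • z2 = 0 → α = 0 ∧ β = 0)
    (h1 : ∀ σ, ∑ τ, eval A (kalmanSq d (coeffVec d f) σ τ) * z1 τ = 0)
    (h2 : ∀ σ, ∑ τ, eval A (kalmanSq d (coeffVec d f) σ τ) * z2 τ = 0) : MV d f A := by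
  intro e₁ e₂ _ he₂
  have := minors_vanish ((kalmanSq d (coeffVec d f)).map (eval A)) z1 z2 hind
    (by ext σ; simpa [Matrix.mulVec, dotProduct] using h1 σ)
    (by ext σ; simpa [Matrix.mulVec, dotProduct] using h2 σ) e₁ e₂ he₂
  rw [RingHom.map_det]
  exact this

/-- `w` independent of `v` in both directions -/
def Ind {n : ℕ} (v w : Fin n → ℂ) : Prop :=
  v ∉ Submodule.span ℂ {w} ∧ w ∉ Submodule.span ℂ {v}

lemma Ind_of {n : ℕ} {v w : Fin n → ℂ} (hv : v ≠ 0) (hw : w ∉ Submodule.span ℂ {v}) : Ind v w := by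
  refine ⟨?_, hw⟩
  intro h
  obtain ⟨c, hc⟩ := Submodule.mem_span_singleton.1 h
  apply hw
  have : c ≠ 0 := by rintro rfl; simp at hc; exact hv hc.symm
  rw [Submodule.mem_span_singleton]
  exact ⟨c⁻¹, by rw [← hc, smul_smul, inv_mul_cancel₀ this, one_smul]⟩

lemma kalman_C {n d : ℕ}
    (f : MvPolynomial (Fin n) ℂ) (hf : f.IsHomogeneous d) (A : MatSpace n) (v : Fin n → ℂ)
    (σ : MonIdx n d) :
    ∑ τ, (eval A (kalmanSq d (coeffVec d f) σ τ)) * monVec d v τ =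
      eval (((toMat A) ^ ((Fintype.equivFin (MonIdx n d)) σ : ℕ)).mulVec v) f := by
  have := kalman_mulVec (RingHom.id ℂ) f hf A v σ
  simpa using this

lemma L1 {n d : ℕ} (hd : 0 < d) (f : MvPolynomial (Fin n) ℂ) (hf : f.IsHomogeneous d)
    (A : MatSpace n) (v w : Fin n → ℂ) (hi : Ind v w)
    (hv : ∀ i : ℕ, eval ((toMat A ^ i).mulVec v) f = 0)
    (hw : ∀ i : ℕ, eval ((toMat A ^ i).mulVec w) f = 0) : MV d f A := by
  refine MV_of f A (monVec d v) (monVec d w) ?_ (fun σ => ?_) (fun σ => ?_)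
  · intro α β h
    have key : ∀ l : Fin n → ℂ, α * (l ⬝ᵥ v) ^ d + β * (l ⬝ᵥ w) ^ d = 0 := by
      intro l
      have hh : (lf l ^ d).IsHomogeneous d := by simpa using (lf_hom l).pow d
      have h1 := pairing (RingHom.id ℂ) _ hh v
      have h2 := pairing (RingHom.id ℂ) _ hh w
      simp only [RingHom.id_apply, eval₂_pow, lf_eval₂] at h1 h2
      unfold dotProduct
      rw [← h1, ← h2, Finset.mul_sum, Finset.mul_sum, ← Finset.sum_add_distrib]
      refine Finset.sum_eq_zero fun σ _ => ?_
      have := congrFun h σ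
      simp only [Pi.add_apply, Pi.smul_apply, smul_eq_mul, Pi.zero_apply] at this
      linear_combination (coeff (monExp σ) (lf l ^ d)) * this
    obtain ⟨l, hl1, hl2⟩ := exists_lf v w hi.1
    obtain ⟨m, hm1, hm2⟩ := exists_lf w v hi.2
    have e1 := key l
    have e2 := key m
    rw [hl1, hl2, zero_pow hd.ne'] at e1
    rw [hm1, hm2, zero_pow hd.ne'] at e2
    simp at e1 e2
    exact ⟨e1, e2⟩
  · rw [kalman_C f hf, hv]
  · rw [kalman_C f hf, hw]

lemma pow_eig {n : ℕ} (A : Matrix (Fin n) (Fin n) ℂ) (v : Fin n → ℂ) (lam : ℂ)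
    (h : A.mulVec v = lam • v) (i : ℕ) : (A ^ i).mulVec v = lam ^ i • v := by
  induction i with
  | zero => simp
  | succ i ih =>
    rw [pow_succ, ← Matrix.mulVec_mulVec, h, Matrix.mulVec_smul, ih, smul_smul, pow_succ, mul_comm]

lemma iE_mulVec {n : ℕ} (A : Matrix (Fin n) (Fin n) ℂ) (v : Fin n → DualNumber ℂ) :
    (fun i => ((A.map iE).mulVec v i).fst) = A.mulVec (fun i => (v i).fst) ∧ 
    (fun i => ((A.map iE).mulVec v i).snd) = A.mulVec (fun i => (v i).snd) := by
  constructor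
  · ext i
    simp [Matrix.mulVec, dotProduct, TrivSqZeroExt.fst_sum]
  · ext i
    simp [Matrix.mulVec, dotProduct, TrivSqZeroExt.snd_sum]

lemma L2 {n d : ℕ} (hd : 0 < d) (f : MvPolynomial (Fin n) ℂ) (hf : f.IsHomogeneous d)
    (A : MatSpace n) (v w : Fin n → ℂ) (lam : ℂ) (hi : Ind v w)
    (hA : (toMat A).mulVec v = lam • v) (hv : eval v f = 0)
    (hw : ∀ i : ℕ, gd f v ((toMat A ^ i).mulVec w) = 0) : MV d f A := by
  set V : Fin n → DualNumber ℂ := fun i => (v i, w i) with hV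
  have hV1 : (fun i => (V i).fst) = v := rfl
  have hV2 : (fun i => (V i).snd) = w := rfl
  refine MV_of f A (monVec d v) (fun τ => (monVec d V τ).snd) ?_ (fun σ => ?_) (fun σ => ?_)
  · intro α β h
    have key : ∀ g : MvPolynomial (Fin n) ℂ, g.IsHomogeneous d →
        α * eval v g + β * gd g v w = 0 := by
      intro g hg
      have h1 := pairing (RingHom.id ℂ) _ hg v
      have h2 := congrArg TrivSqZeroExt.snd (pairing iE _ hg V)
      rw [dual_snd, hV1, hV2] at h2
      simp only [RingHom.id_apply] at h1
      rw [← h2, eval, coe_eval₂Hom, ← h1, Finset.mul_sum, TrivSqZeroExt.snd_sum, Finset.mul_sum,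
        ← Finset.sum_add_distrib]
      refine Finset.sum_eq_zero fun σ _ => ?_
      have := congrFun h σ
      simp only [Pi.add_apply, Pi.smul_apply, smul_eq_mul, Pi.zero_apply] at this
      simp
      linear_combination (coeff (monExp σ) g) * this
    obtain ⟨l, hl1, hl2⟩ := exists_lf v w hi.1
    obtain ⟨m, hm1, hm2⟩ := exists_lf w v hi.2
    have ev : ∀ l x : Fin n → ℂ, eval x (lf l) = l ⬝ᵥ x := by
      intro l x
      simp [lf, dotProduct]
    have gl : ∀ l x : Fin n → ℂ, gd (lf l) v x = l ⬝ᵥ x := by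
      intro l x
      simp [gd, lf, dotProduct, Pi.single_apply, pderiv_X, mul_comm]
    have gm : ∀ p q : MvPolynomial (Fin n) ℂ, gd (p * q) v w = eval v p * gd q v w +
        eval v q * gd p v w := by
      intro p q
      simp only [gd, Derivation.leibniz, smul_eq_mul, map_add, map_mul, mul_add, Finset.mul_sum,
        Finset.sum_add_distrib]
      congr 1 <;> exact Finset.sum_congr rfl fun j _ => by ring
    have gp : ∀ k : ℕ, gd (lf l ^ k) v w = 0 := by
      intro k
      induction k with
      | zero => simp [gd]
      | succ k ih => rw [pow_succ, gm, gl, ih, hl2]; simp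
    have e1 := key (lf l ^ d) (by simpa using (lf_hom l).pow d)
    have e2 := key (lf l ^ (d - 1) * lf m) (by 
      have := ((lf_hom l).pow (d - 1)).mul (lf_hom m)
      have h' : 1 * (d - 1) + 1 = d := by omega
      rwa [h'] at this)
    rw [gp, map_pow, ev, hl1] at e1
    rw [gm, gp, gl, hm1, map_mul, ev m, hm2, map_pow, ev, hl1] at e2
    simp at e1 e2
    exact ⟨e1, e2⟩
  · rw [kalman_C f hf, pow_eig _ _ _ hA, hom_smul f hf, hv, mul_zero]
  · have h2 := congrArg TrivSqZeroExt.snd (kalman_mulVec iE f hf A V σ)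
    have hm : ((toMat A).map iE) ^ ((Fintype.equivFin (MonIdx n d)) σ : ℕ) =
      ((toMat A) ^ ((Fintype.equivFin (MonIdx n d)) σ : ℕ)).map iE := (Matrix.map_pow _ iE _).symm
    rw [dual_snd, hm, (iE_mulVec _ _).1, (iE_mulVec _ _).2, hV1, hV2, pow_eig _ _ _ hA, 
      gd_smul_left f hf, hw, mul_zero] at h2
    rw [← h2, TrivSqZeroExt.snd_sum]
    exact Finset.sum_congr rfl fun τ _ => by simp

end

section
open MvPolynomial

lemma poly_const_or_root (h : Polynomial ℂ) : (∃ t, h.eval t = 0) ∨ Polynomial.derivative h = 0 := by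
  by_cases hdeg : h.degree = 0
  · right
    rw [Polynomial.eq_C_of_degree_eq_zero hdeg]; simp
  · left
    obtain ⟨t, ht⟩ := IsAlgClosed.exists_root h hdeg
    exact ⟨t, ht⟩

lemma eval_line {n : ℕ} (f : MvPolynomial (Fin n) ℂ) (w v : Fin n → ℂ) (t : ℂ) :
    (eval₂ Polynomial.C (fun i => Polynomial.C (w i) + Polynomial.C (v i) * Polynomial.X) f).eval t
      = eval (w + t • v) f := by
  induction f using MvPolynomial.induction_on with
  | C a => simp
  | add p q hp hq => simp [hp, hq]
  | mul_X p i hp => simp [hp, mul_comm t]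

lemma deriv_line {n : ℕ} (f : MvPolynomial (Fin n) ℂ) (w v : Fin n → ℂ) (t : ℂ) :
    (Polynomial.derivative (eval₂ Polynomial.C
      (fun i => Polynomial.C (w i) + Polynomial.C (v i) * Polynomial.X) f)).eval t
      = gd f (w + t • v) v := by
  rw [poly_chain]
  congr 1
  · ext i; simp [mul_comm t]
  · ext i; simp

lemma span_add_notMem {n : ℕ} {v w : Fin n → ℂ} (t : ℂ) (h : w ∉ Submodule.span ℂ {v}) :
    w + t • v ∉ Submodule.span ℂ {v} := by
  intro h'
  apply h
  have := Submodule.sub_mem _ h' (Submodule.smul_mem _ t (Submodule.mem_span_singleton_self v))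
  simpa using this

/-- (c) -/
lemma MV_two {n d : ℕ} (hd : 0 < d) (f : MvPolynomial (Fin n) ℂ) (hf : f.IsHomogeneous d)
    (A : MatSpace n) (v w : Fin n → ℂ) (lam mu : ℂ) (hi : Ind v w)
    (hA : (toMat A).mulVec v = lam • v) (hv : eval v f = 0)
    (hA' : (toMat A).mulVec w = mu • w) (hw : eval w f = 0) : MV d f A := by
  refine L1 hd f hf A v w hi (fun i => ?_) (fun i => ?_)
  · rw [pow_eig _ _ _ hA, hom_smul f hf, hv, mul_zero]
  · rw [pow_eig _ _ _ hA', hom_smul f hf, hw, mul_zero]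

/-- eigenvector on `X` with critical direction -/
lemma MV_jordan {n d : ℕ} (hd : 0 < d) (f : MvPolynomial (Fin n) ℂ) (hf : f.IsHomogeneous d)
    (A : MatSpace n) (v w : Fin n → ℂ) (lam mu : ℂ) (hi : Ind v w)
    (hA : (toMat A).mulVec v = lam • v) (hv : eval v f = 0)
    (hw : (toMat A).mulVec w = lam • w + mu • v) (hg : gd f v w = 0) : MV d f A := by
  refine L2 hd f hf A v w lam hi hA hv (fun i => ?_)
  have : ∀ i : ℕ, ∃ c e : ℂ, (toMat A ^ i).mulVec w = c • w + e • v := by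
    intro i
    induction i with
    | zero => exact ⟨1, 0, by simp⟩
    | succ i ih =>
      obtain ⟨c, e, h⟩ := ih
      refine ⟨c * lam, c * mu + e * lam, ?_⟩
      rw [pow_succ', ← Matrix.mulVec_mulVec, h, Matrix.mulVec_add, Matrix.mulVec_smul,
        Matrix.mulVec_smul, hw, hA]
      module
  obtain ⟨c, e, h⟩ := this i
  rw [h, gd_add, gd_smul, gd_smul, hg, euler f hf, hv]
  simp

lemma MV_eigspace {n d : ℕ} (hd : 0 < d) (f : MvPolynomial (Fin n) ℂ)
    (hf : f.IsHomogeneous d) (hd2 : 2 ≤ d)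
    (A : MatSpace n) (a b : Fin n → ℂ) (lam : ℂ) (hi : Ind a b)
    (hA : (toMat A).mulVec a = lam • a) (hB : (toMat A).mulVec b = lam • b) : MV d f A := by
  have hne : ∀ {v w : Fin n → ℂ}, Ind v w → v ≠ 0 := by
    rintro v w h rfl
    exact h.1 (Submodule.zero_mem _)
  -- main step
  have main : ∀ v w : Fin n → ℂ, Ind v w → (toMat A).mulVec v = lam • v →
      (toMat A).mulVec w = lam • w → eval v f = 0 → MV d f A := by
    intro v w hvw hv hw hfv
    rcases poly_const_or_root (eval₂ Polynomial.C
      (fun i => Polynomial.C (v i) + Polynomial.C (w i) * Polynomial.X) f) with ⟨t, ht⟩ | h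
    · rcases poly_const_or_root (eval₂ Polynomial.C
        (fun i => Polynomial.C (w i) + Polynomial.C (v i) * Polynomial.X) f) with ⟨t, ht⟩ | h
      · rw [eval_line] at ht
        refine MV_two hd f hf A v (w + t • v) lam lam (Ind_of (hne hvw) (span_add_notMem t hvw.2))
          hv hfv ?_ ht
        rw [Matrix.mulVec_add, Matrix.mulVec_smul, hv, hw]
        module
      · -- f(w + t v) is constant, hence equal to f(w); homogenize
        have hc : ∀ t : ℂ, eval (w + t • v) f = eval w f := by
          intro t
          have := Polynomial.eq_C_of_derivative_eq_zero h
          have h0 := eval_line f w v t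
          have h1 := eval_line f w v 0
          rw [this] at h0 h1
          simp only [Polynomial.eval_C, zero_smul, add_zero] at h0 h1
          rw [← h0, ← h1]
        -- f(s w + v) = s^d f(w), derivative at s=0 is zero
        have hc2 : ∀ s : ℂ, eval (v + s • w) f = s ^ d * eval w f := by
          intro s
          by_cases hs : s = 0
          · subst hs
            simp [hfv, hd.ne']
          · have : v + s • w = s • (w + s⁻¹ • v) := by
              rw [smul_add, smul_smul, mul_inv_cancel₀ hs, one_smul, add_comm]
            rw [this, hom_smul f hf, hc]
        refine MV_jordan hd f hf A v w lam 0 hvw hv hfv (by simp [hw]) ?_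
        have hp : eval₂ Polynomial.C
          (fun i => Polynomial.C (v i) + Polynomial.C (w i) * Polynomial.X) f =
            Polynomial.C (eval w f) * Polynomial.X ^ d := by
          apply Polynomial.funext
          intro s
          rw [eval_line, hc2]; simp only [Polynomial.eval_mul, Polynomial.eval_C, Polynomial.eval_pow, Polynomial.eval_X]; ring
        have := deriv_line f v w 0
        rw [hp] at this
        rw [Polynomial.derivative_C_mul, Polynomial.derivative_X_pow] at this
        simp only [Polynomial.eval_mul, Polynomial.eval_C, Polynomial.eval_pow, Polynomial.eval_X,
          zero_smul, add_zero] at this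
        rw [← this, zero_pow (by omega)]
        simp
    · refine MV_jordan hd f hf A v w lam 0 hvw hv hfv (by simp [hw]) ?_
      have := deriv_line f v w 0
      rw [h] at this
      simpa using this.symm
  -- find a point of `X`
  rcases poly_const_or_root (eval₂ Polynomial.C
        (fun i => Polynomial.C (b i) + Polynomial.C (a i) * Polynomial.X) f) with ⟨t, ht⟩ | h
  · rw [eval_line] at ht
    have h1 := Ind_of (hne hi) (span_add_notMem t hi.2)
    refine main (b + t • a) a ⟨h1.2, h1.1⟩ ?_ hA ht
    rw [Matrix.mulVec_add, Matrix.mulVec_smul, hA, hB]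
    module
  · have h0 : eval a f = 0 := by
      have hc : ∀ t : ℂ, eval (b + t • a) f = eval b f := by
        intro t
        have := Polynomial.eq_C_of_derivative_eq_zero h
        have h0 := eval_line f b a t
        have h1 := eval_line f b a 0
        rw [this] at h0 h1
        simp only [Polynomial.eval_C, zero_smul, add_zero] at h0 h1
        rw [← h0, ← h1]
      have hp : (eval₂ Polynomial.C
          (fun i => Polynomial.C (a i) + Polynomial.C (b i) * Polynomial.X) f) - 
            Polynomial.C (eval b f) * Polynomial.X ^ d = 0 := by
        apply Polynomial.eq_zero_of_infinite_isRoot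
        refine Set.Infinite.mono (s := {0}ᶜ) ?_ (Set.Finite.infinite_compl (Set.finite_singleton 0))
        intro s hs
        have hs : s ≠ 0 := hs
        have : a + s • b = s • (b + s⁻¹ • a) := by
          rw [smul_add, smul_smul, mul_inv_cancel₀ hs, one_smul, add_comm]
        simp only [Set.mem_ofPred_eq, Polynomial.IsRoot, Polynomial.eval_sub, eval_line]
        rw [this, hom_smul f hf, hc]
        simp only [Polynomial.eval_mul, Polynomial.eval_C, Polynomial.eval_pow, Polynomial.eval_X]; ring
      have := congrArg (Polynomial.eval 0) hp
      rw [Polynomial.eval_sub, eval_line] at this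
      simpa [hd.ne'] using this
    exact main a b hi hA hB h0

/-- (b) -/
lemma MV_crit {n d : ℕ} (hd : 0 < d) (f : MvPolynomial (Fin n) ℂ) (hf : f.IsHomogeneous d)
    (A : MatSpace n) (v w : Fin n → ℂ) (lam : ℂ) (hi : Ind v w)
    (hA : (toMat A).mulVec v = lam • v) (hv : eval v f = 0)
    (hg : ∀ x, gd f v x = 0) : MV d f A :=
  L2 hd f hf A v w lam hi hA hv (fun _ => hg _)

/-- existence of an independent vector for a nonzero point of `X` -/
lemma exists_ind {n d : ℕ} (f : MvPolynomial (Fin n) ℂ) (hf : f.IsHomogeneous d) (hf0 : f ≠ 0)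
    (v : Fin n → ℂ) (hv0 : v ≠ 0) (hv : eval v f = 0) : ∃ w, Ind v w := by
  by_contra hcon
  push Not at hcon
  apply hf0
  apply MvPolynomial.funext
  intro x
  have : x ∈ Submodule.span ℂ {v} := by
    by_contra h
    exact hcon x (Ind_of hv0 h)
  obtain ⟨c, rfl⟩ := Submodule.mem_span_singleton.1 this
  rw [hom_smul f hf, hv]; simp

end

section
open Matrix

lemma det_lemma_unit {R : Type*} [CommRing R] {n : ℕ} (M : Matrix (Fin n) (Fin n) R)
    (hM : IsUnit M.det) (a b : Fin n → R) :
    (M + vecMulVec a b).det = M.det + b ⬝ᵥ (M.adjugate *ᵥ a) := by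
  rw [vecMulVec_eq Unit, det_add_replicateCol_mul_replicateRow hM]
  have : (1 + replicateRow Unit b * M⁻¹ * replicateCol Unit a).det = 1 + b ⬝ᵥ (M⁻¹ *ᵥ a) := by
    rw [det_unique]
    simp only [Matrix.add_apply, Matrix.one_apply_eq, Matrix.mul_assoc]
    congr 1
  rw [this, mul_add, mul_one]
  congr 1
  rw [Matrix.inv_def, smul_mulVec, dotProduct_smul, smul_eq_mul, ← mul_assoc,
    Ring.mul_inverse_cancel _ hM, one_mul]

lemma det_lemma {R : Type*} [CommRing R] {n : ℕ} (M : Matrix (Fin n) (Fin n) R)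
    (a b : Fin n → R) :
    (M + vecMulVec a b).det = M.det + b ⬝ᵥ (M.adjugate *ᵥ a) := by
  -- pass to `R[X]`
  let P := Polynomial R
  let K := Localization (nonZeroDivisors P)
  let N : Matrix (Fin n) (Fin n) P := charmatrix (-M)
  let aaux : Fin n → P := fun i => Polynomial.C (a i)
  let b' : Fin n → P := fun i => Polynomial.C (b i)
  have hN : N.det ∈ nonZeroDivisors P := (Matrix.charpoly_monic (-M)).mem_nonZeroDivisors
  have hinj : Function.Injective (algebraMap P K) := IsLocalization.injective K le_rfl
  have key : (N + vecMulVec aaux b').det = N.det + b' ⬝ᵥ (N.adjugate *ᵥ aaux) := by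
    apply hinj
    have hu : IsUnit ((algebraMap P K).mapMatrix N).det := by
      rw [← RingHom.map_det]
      exact IsLocalization.map_units K (⟨_, hN⟩ : nonZeroDivisors P)
    have := det_lemma_unit ((algebraMap P K).mapMatrix N) hu
      (fun i => algebraMap P K (aaux i)) (fun i => algebraMap P K (b' i))
    rw [RingHom.map_det, map_add, map_add, RingHom.map_det, RingHom.map_dotProduct]
    have e1 : (algebraMap P K).mapMatrix (vecMulVec aaux b') =
      vecMulVec (fun i => algebraMap P K (aaux i)) (fun i => algebraMap P K (b' i)) := by
      ext i j; simp [vecMulVec]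
    rw [e1, this, ← RingHom.map_adjugate]
    congr 2
    ext i
    simp [RingHom.map_mulVec, Function.comp_def]
  have := congrArg (Polynomial.evalRingHom 0) key
  rw [RingHom.map_det, map_add, map_add, RingHom.map_det, RingHom.map_dotProduct] at this
  have e0 : (Polynomial.evalRingHom 0).mapMatrix N = M := by
    ext i j
    simp [N, charmatrix_apply, Matrix.diagonal_apply]
    split_ifs <;> simp
  have e1 : (Polynomial.evalRingHom 0).mapMatrix (vecMulVec aaux b') = vecMulVec a b := by
    ext i j
    simp [vecMulVec, aaux, b']
  rw [e0, e1] at this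
  rw [this]
  congr 2
  · ext i; simp [b']
  · ext i
    rw [Function.comp_apply, RingHom.map_mulVec]
    have e2 : N.adjugate.map (Polynomial.evalRingHom 0) = M.adjugate := by
      rw [← e0, ← RingHom.map_adjugate]; rfl
    rw [e2]
    congr 2
    ext i; simp [aaux]

/-- two independent kernel vectors kill the adjugate -/
lemma adj_zero {n : ℕ} (M : Matrix (Fin n) (Fin n) ℂ) (v w : Fin n → ℂ) (hi : Ind v w)
    (hv : M *ᵥ v = 0) (hw : M *ᵥ w = 0) (u : Fin n → ℂ) : M.adjugate *ᵥ u = 0 := by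
  rw [← cramer_eq_adjugate_mulVec]
  ext i
  rw [cramer_apply, Pi.zero_apply, ← Matrix.exists_mulVec_eq_zero_iff]
  obtain ⟨z, hz, hMz, hzi⟩ : ∃ z : Fin n → ℂ, z ≠ 0 ∧ M *ᵥ z = 0 ∧ z i = 0 := by
    by_cases h : v i = 0
    · refine ⟨v, ?_, hv, h⟩
      rintro rfl
      exact hi.1 (Submodule.zero_mem _)
    · refine ⟨w - (w i / v i) • v, ?_, ?_, ?_⟩
      · intro h0
        apply hi.2
        rw [Submodule.mem_span_singleton]
        exact ⟨_, (sub_eq_zero.1 h0).symm⟩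
      · rw [mulVec_sub, mulVec_smul, hv, hw]; simp
      · simp; field_simp; simp
  refine ⟨z, hz, ?_⟩
  rw [← hMz]
  ext k
  simp only [mulVec, dotProduct]
  refine Finset.sum_congr rfl fun j _ => ?_
  by_cases hj : j = i
  · subst hj; simp [hzi]
  · simp [hj]

/-- one dimensional kernel implies nonzero adjugate -/
lemma adj_ne_zero {n : ℕ} (M : Matrix (Fin n) (Fin n) ℂ) (v : Fin n → ℂ) (hv0 : v ≠ 0)
    (hv : M *ᵥ v = 0) (h : ∀ w, M *ᵥ w = 0 → w ∈ Submodule.span ℂ {v}) : M.adjugate ≠ 0 := by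
  intro hadj
  obtain ⟨i, hi⟩ := Function.ne_iff.1 hv0
  have hns : ¬ Function.Surjective M.mulVec := by
    intro hs
    have hinj : Function.Injective M.mulVecLin :=
      LinearMap.injective_iff_surjective.2 hs
    exact hv0 (hinj (by simp [hv]))
  simp only [Function.Surjective, not_forall] at hns
  obtain ⟨b, hb⟩ := hns
  push Not at hb
  have h0 : (M.updateCol i b).det = 0 := by
    rw [← cramer_apply, cramer_eq_adjugate_mulVec, hadj]; simp
  rw [← Matrix.exists_mulVec_eq_zero_iff] at h0
  obtain ⟨z, hz, hz2⟩ := h0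
  have hz3 : M *ᵥ (Function.update z i 0) + z i • b = 0 := by
    rw [← hz2]
    ext k
    simp only [mulVec, dotProduct, Pi.add_apply, Pi.smul_apply, smul_eq_mul]
    rw [← Finset.add_sum_erase _ _ (Finset.mem_univ i),
      ← Finset.add_sum_erase (a := i) (f := fun j => M.updateCol i b k j * z j) _
        (Finset.mem_univ i)]
    have : ∑ j ∈ Finset.univ.erase i, M k j * Function.update z i 0 j =
        ∑ j ∈ Finset.univ.erase i, M.updateCol i b k j * z j := by
      refine Finset.sum_congr rfl fun j hj => ?_
      have : j ≠ i := Finset.ne_of_mem_erase hj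
      simp [this]
    rw [this]
    simp
    ring
  by_cases hzi : z i = 0
  · have : Function.update z i 0 = z := by
      rw [← hzi]; simp
    rw [this, hzi, zero_smul, add_zero] at hz3
    obtain ⟨c, hc⟩ := Submodule.mem_span_singleton.1 (h z hz3)
    have h1 : c * v i = 0 := by rw [← hzi, ← hc]; simp
    have hc0 : c = 0 := by
      rcases mul_eq_zero.1 h1 with h | h
      · exact h
      · exact absurd h hi
    apply hz
    rw [← hc, hc0, zero_smul]
  · refine hb (-(z i)⁻¹ • Function.update z i 0) ?_
    have e : M *ᵥ (Function.update z i 0) = - (z i • b) := eq_neg_of_add_eq_zero_left hz3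
    rw [mulVec_smul, e]
    rw [smul_neg, neg_smul, neg_neg, smul_smul, inv_mul_cancel₀ hzi, one_smul]

end

section
open Matrix

section
variable {S : Type*} [CommRing S] {n : ℕ} (φ : ℂ →+* S)

/-- `adj (x - M) u` -/
def yv (M : Matrix (Fin n) (Fin n) S) (u : Fin n → ℂ) : Fin n → Polynomial S :=
  (charmatrix M).adjugate *ᵥ (fun i => Polynomial.C (φ (u i)))

/-- `f (adj (x - M) u)` -/
def gp (f : MvPolynomial (Fin n) ℂ) (M : Matrix (Fin n) (Fin n) S) (u : Fin n → ℂ) :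
    Polynomial S :=
  MvPolynomial.eval₂ (Polynomial.C.comp φ) (yv φ M u) f

/-- `det (g_M(M))` -/
def pp (f : MvPolynomial (Fin n) ℂ) (M : Matrix (Fin n) (Fin n) S) (u : Fin n → ℂ) : S :=
  (Polynomial.aeval M (gp φ f M u)).det

variable {T : Type*} [CommRing T] (ψ : S →+* T)

lemma yv_map (M : Matrix (Fin n) (Fin n) S) (u : Fin n → ℂ) (i : Fin n) :
    (yv φ M u i).map ψ = yv (ψ.comp φ) (M.map ψ) u i := by
  unfold yv
  rw [← Polynomial.coe_mapRingHom, RingHom.map_mulVec]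
  have : ((charmatrix M).adjugate).map (Polynomial.mapRingHom ψ) =
      (charmatrix (M.map ψ)).adjugate := by
    rw [charmatrix_map]
    exact RingHom.map_adjugate (Polynomial.mapRingHom ψ) _
  rw [this]
  congr 2
  ext1 j
  simp

lemma gp_map (f : MvPolynomial (Fin n) ℂ) (M : Matrix (Fin n) (Fin n) S) (u : Fin n → ℂ) :
    (gp φ f M u).map ψ = gp (ψ.comp φ) f (M.map ψ) u := by
  unfold gp
  rw [← Polynomial.coe_mapRingHom, MvPolynomial.hom_eval₂]
  congr 1
  · ext1 x; simp
  · ext1 i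
    simp only [Polynomial.coe_mapRingHom]
    exact yv_map φ ψ M u i

lemma aeval_map (M : Matrix (Fin n) (Fin n) S) (g : Polynomial S) :
    (Polynomial.aeval M g).map ψ = Polynomial.aeval (M.map ψ) (g.map ψ) := by
  have : ∀ N : Matrix (Fin n) (Fin n) S, N.map ψ = ψ.mapMatrix N := fun _ => rfl
  induction g using Polynomial.induction_on' with
  | add p q hp hq => 
    rw [this] at hp hq ⊢
    simp only [map_add, Polynomial.map_add, hp, hq]
  | monomial k a =>
    rw [this]
    simp only [Polynomial.aeval_monomial, Polynomial.map_monomial, map_mul, map_pow]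
    congr 1
    ext i j
    simp [Matrix.algebraMap_matrix_apply]
    split_ifs <;> simp

lemma pp_map (f : MvPolynomial (Fin n) ℂ) (M : Matrix (Fin n) (Fin n) S) (u : Fin n → ℂ) :
    ψ (pp φ f M u) = pp (ψ.comp φ) f (M.map ψ) u := by
  unfold pp
  rw [RingHom.map_det, ← gp_map, ← aeval_map]
  rfl

lemma yv_eval (M : Matrix (Fin n) (Fin n) S) (u : Fin n → ℂ) (t : S) :
    (fun i => (yv φ M u i).eval t) = (scalar (Fin n) t - M).adjugate *ᵥ (fun i => φ (u i)) := by
  ext1 i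
  unfold yv
  rw [← Polynomial.coe_evalRingHom, RingHom.map_mulVec]
  have : ((charmatrix M).adjugate).map (Polynomial.evalRingHom t) =
      (scalar (Fin n) t - M).adjugate := by
    have := RingHom.map_adjugate (Polynomial.evalRingHom t) (charmatrix M)
    refine Eq.trans this ?_
    congr 1
    ext i j
    simp [charmatrix_apply, Matrix.diagonal_apply]
    split_ifs <;> simp
  rw [this]
  congr 2
  ext1 j
  simp

lemma gp_eval (f : MvPolynomial (Fin n) ℂ) (M : Matrix (Fin n) (Fin n) S) (u : Fin n → ℂ) (t : S) :
    (gp φ f M u).eval t =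
      MvPolynomial.eval₂ φ ((scalar (Fin n) t - M).adjugate *ᵥ (fun i => φ (u i))) f := by
  unfold gp
  rw [← yv_eval, ← Polynomial.coe_evalRingHom, MvPolynomial.hom_eval₂]
  congr 1
  ext1 x; simp

lemma yv_identity (M : Matrix (Fin n) (Fin n) S) (u : Fin n → ℂ) :
    (charmatrix M) *ᵥ (yv φ M u) = M.charpoly • (fun i => Polynomial.C (φ (u i))) := by
  unfold yv
  rw [mulVec_mulVec, mul_adjugate, smul_mulVec, one_mulVec]
  rfl
end

lemma det_aeval_eq_zero_iff {n : ℕ} (hn : 0 < n) (M : Matrix (Fin n) (Fin n) ℂ)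
    (g : Polynomial ℂ) :
    (Polynomial.aeval M g).det = 0 ↔ ∃ t, (scalar (Fin n) t - M).det = 0 ∧ g.eval t = 0 := by
  have : Nonempty (Fin n) := ⟨⟨0, hn⟩⟩
  have hspec : ∀ (N : Matrix (Fin n) (Fin n) ℂ) t, t ∈ spectrum ℂ N ↔
      (scalar (Fin n) t - N).det = 0 := by
    intro N t
    rw [spectrum.mem_iff, Matrix.isUnit_iff_isUnit_det, isUnit_iff_ne_zero, not_not]
    rfl
  have h := spectrum.map_polynomial_aeval_of_nonempty M g
    (spectrum.nonempty_of_isAlgClosed_of_finiteDimensional ℂ M)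
  have h0 : (0 : ℂ) ∈ spectrum ℂ (Polynomial.aeval M g) ↔ (Polynomial.aeval M g).det = 0 := by
    rw [hspec]
    simp [Matrix.det_neg]
  rw [← h0, h]
  simp only [Set.mem_image, hspec]

lemma pp_zero_iff {n : ℕ} (hn : 0 < n) (f : MvPolynomial (Fin n) ℂ)
    (M : Matrix (Fin n) (Fin n) ℂ) (u : Fin n → ℂ) :
    pp (RingHom.id ℂ) f M u = 0 ↔ ∃ t, (scalar (Fin n) t - M).det = 0 ∧
      MvPolynomial.eval ((scalar (Fin n) t - M).adjugate *ᵥ u) f = 0 := by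
  unfold pp
  rw [det_aeval_eq_zero_iff hn]
  simp only [gp_eval]
  rfl

/-- the polynomial -/
def ppoly {n : ℕ} (f : MvPolynomial (Fin n) ℂ) (u : Fin n → ℂ) :
    MvPolynomial (Fin n × Fin n) ℂ :=
  pp MvPolynomial.C f (genMat n) u

lemma ppoly_eval {n : ℕ} (f : MvPolynomial (Fin n) ℂ) (u : Fin n → ℂ) (A : MatSpace n) :
    MvPolynomial.eval A (ppoly f u) = pp (RingHom.id ℂ) f (toMat A) u := by
  unfold ppoly
  rw [pp_map]
  congr 1
  · ext1 x; simp
  · ext i j; simp [genMat, toMat]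

lemma ppoly_eval₂ {n : ℕ} {S : Type*} [CommRing S] (φ : ℂ →+* S) (f : MvPolynomial (Fin n) ℂ)
    (u : Fin n → ℂ) (A : Fin n × Fin n → S) :
    MvPolynomial.eval₂ φ A (ppoly f u) = pp φ f (Matrix.of fun i j => A (i, j)) u := by
  unfold ppoly
  rw [← MvPolynomial.coe_eval₂Hom, pp_map]
  congr 1
  · ext1 x; simp
  · ext i j; simp [genMat]

lemma ker_iff {n : ℕ} (M : Matrix (Fin n) (Fin n) ℂ) (t : ℂ) (v : Fin n → ℂ) :
    (scalar (Fin n) t - M) *ᵥ v = 0 ↔ M *ᵥ v = t • v := by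
  rw [sub_mulVec, sub_eq_zero]
  have : (scalar (Fin n) t) *ᵥ v = t • v := by
    ext i; simp [Matrix.mulVec_diagonal]
  rw [this]
  exact eq_comm

lemma adj_eig {n : ℕ} (M : Matrix (Fin n) (Fin n) ℂ) (t : ℂ) (u : Fin n → ℂ)
    (h : (scalar (Fin n) t - M).det = 0) :
    M *ᵥ ((scalar (Fin n) t - M).adjugate *ᵥ u) = t • ((scalar (Fin n) t - M).adjugate *ᵥ u) := by
  rw [← ker_iff, mulVec_mulVec, mul_adjugate, h, zero_smul, zero_mulVec]

lemma ppoly_vanish {n d : ℕ} (hn : 0 < n) (f : MvPolynomial (Fin n) ℂ)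
    (hf : f.IsHomogeneous d) (u : Fin n → ℂ) (B : MatSpace n) (v : Fin n → ℂ)
    (hv : MvPolynomial.eval v f = 0) (he : IsEigenvector (toMat B) v) :
    MvPolynomial.eval B (ppoly f u) = 0 := by
  obtain ⟨hv0, t, ht⟩ := he
  rw [ppoly_eval, pp_zero_iff hn]
  have hk := (ker_iff (toMat B) t v).2 ht
  have hdet : (scalar (Fin n) t - toMat B).det = 0 :=
    Matrix.exists_mulVec_eq_zero_iff.1 ⟨v, hv0, hk⟩
  refine ⟨t, hdet, ?_⟩
  by_cases h : (scalar (Fin n) t - toMat B).adjugate *ᵥ u ∈ Submodule.span ℂ {v}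
  · obtain ⟨c, hc⟩ := Submodule.mem_span_singleton.1 h
    rw [← hc, hom_smul f hf, hv, mul_zero]
  · exfalso
    apply h
    rw [adj_zero _ v _ (Ind_of hv0 h) hk ((ker_iff _ _ _).2 (adj_eig _ _ _ hdet)) u]
    exact Submodule.zero_mem _

lemma ppoly_conv {n : ℕ} (hn : 0 < n) (f : MvPolynomial (Fin n) ℂ)
    (u b : Fin n → ℂ) (B : MatSpace n)
    (h1 : MvPolynomial.eval B (ppoly f u) = 0)
    (h2 : MvPolynomial.eval B (ppoly (lf b) u) ≠ 0) :
    ∃ v t, (scalar (Fin n) t - toMat B).det = 0 ∧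
      v = (scalar (Fin n) t - toMat B).adjugate *ᵥ u ∧ v ≠ 0 ∧ b ⬝ᵥ v ≠ 0 ∧
      MvPolynomial.eval v f = 0 ∧ toMat B *ᵥ v = t • v := by
  rw [ppoly_eval, pp_zero_iff hn] at h1
  rw [ppoly_eval, Ne, pp_zero_iff hn] at h2
  obtain ⟨t, ht, hf⟩ := h1
  push Not at h2
  have h3 := h2 t ht
  have : b ⬝ᵥ ((scalar (Fin n) t - toMat B).adjugate *ᵥ u) ≠ 0 := by
    intro h; apply h3
    rw [← h]
    simp [lf, dotProduct]
  refine ⟨_, t, ht, rfl, ?_, this, hf, adj_eig _ _ _ ht⟩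
  intro h
  rw [h] at this
  simp at this

/-- choice of `u` and `b` -/
lemma exists_ub {n : ℕ} (hn : 0 < n) (M : Matrix (Fin n) (Fin n) ℂ)
    (h : ∀ t, (scalar (Fin n) t - M).det = 0 → (scalar (Fin n) t - M).adjugate ≠ 0) :
    ∃ u b : Fin n → ℂ, pp (RingHom.id ℂ) (lf b) M u ≠ 0 := by
  classical
  let q : ℂ → MvPolynomial (Fin n ⊕ Fin n) ℂ := fun t =>
    ∑ i, ∑ j, MvPolynomial.C ((scalar (Fin n) t - M).adjugate i j) *
      (MvPolynomial.X (Sum.inl i) * MvPolynomial.X (Sum.inr j))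
  have hq : ∀ t (x : Fin n ⊕ Fin n → ℂ), MvPolynomial.eval x (q t) =
      (fun i => x (Sum.inl i)) ⬝ᵥ ((scalar (Fin n) t - M).adjugate *ᵥ (fun j => x (Sum.inr j))) := by
    intro t x
    simp only [q, map_sum, map_mul, MvPolynomial.eval_C, MvPolynomial.eval_X, dotProduct, mulVec,
      Finset.mul_sum]
    exact Finset.sum_congr rfl fun i _ => Finset.sum_congr rfl fun j _ => by ring
  have hq0 : ∀ t, (scalar (Fin n) t - M).det = 0 → q t ≠ 0 := by
    intro t ht h0
    apply h t ht
    ext i j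
    have := hq t (Sum.elim (Pi.single i 1) (Pi.single j 1))
    rw [h0] at this
    simpa using this.symm
  have hprod : ∏ t ∈ M.charpoly.roots.toFinset, q t ≠ 0 := by
    rw [Finset.prod_ne_zero_iff]
    intro t ht
    apply hq0
    rw [← Matrix.eval_charpoly]
    simpa [M.charpoly_monic.ne_zero] using ht
  obtain ⟨x, hx⟩ : ∃ x, MvPolynomial.eval x (∏ t ∈ M.charpoly.roots.toFinset, q t) ≠ 0 := by
    by_contra hcon
    push Not at hcon
    exact hprod (MvPolynomial.funext (by simpa using hcon))
  rw [map_prod, Finset.prod_ne_zero_iff] at hx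
  refine ⟨fun j => x (Sum.inr j), fun i => x (Sum.inl i), ?_⟩
  rw [Ne, pp_zero_iff hn]
  rintro ⟨t, ht, h0⟩
  refine hx t ?_ ?_
  · rw [← Matrix.eval_charpoly] at ht
    simpa [M.charpoly_monic.ne_zero] using ht
  · rw [hq, ← h0]
    simp [lf, dotProduct]

end

section
open Matrix

/-- reduction of dual numbers -/
def fE : DualNumber ℂ →+* ℂ := (TrivSqZeroExt.fstHom ℂ ℂ ℂ).toRingHom

@[simp] lemma fE_apply (x : DualNumber ℂ) : fE x = x.fst := rfl

lemma fE_eval (P : Polynomial (DualNumber ℂ)) (x : DualNumber ℂ) :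
    (P.eval x).fst = (P.map fE).eval x.fst := by
  rw [← fE_apply, ← Polynomial.eval_map_apply, fE_apply]

lemma eval_shift (P : Polynomial (DualNumber ℂ)) (lam c : ℂ) :
    P.eval (iE lam + TrivSqZeroExt.inr c) =
      P.eval (iE lam) +
      TrivSqZeroExt.inr (c * (Polynomial.derivative (P.map fE)).eval lam) := by
  rw [Polynomial.eval_add_of_sq_eq_zero _ _ _ (by rw [sq]; exact TrivSqZeroExt.inr_mul_inr _ _ _)]
  congr 1
  rw [Polynomial.derivative_map]
  apply TrivSqZeroExt.ext
  · simp
  · simp only [TrivSqZeroExt.snd_mul, TrivSqZeroExt.snd_inr, TrivSqZeroExt.fst_inr, fE_eval]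
    simp [mul_comm]

lemma core {n : ℕ} (hn : 0 < n) (Ae : Matrix (Fin n) (Fin n) (DualNumber ℂ))
    (A : Matrix (Fin n) (Fin n) ℂ) (hA : Ae.map fE = A)
    (Ge : Polynomial (DualNumber ℂ)) (G : Polynomial ℂ) (hG : Ge.map fE = G) (lam : ℂ)
    (hchi : A.charpoly.eval lam = 0) (hG0 : G.eval lam = 0)
    (hG1 : (Polynomial.derivative G).eval lam ≠ 0)
    (hG2 : ∀ mu, mu ≠ lam → (scalar (Fin n) mu - A).det = 0 → G.eval mu ≠ 0)
    (hcond : (Ae.charpoly.eval (iE lam)).snd * (Polynomial.derivative G).eval lam -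
      (Ge.eval (iE lam)).snd * (Polynomial.derivative A.charpoly).eval lam ≠ 0) :
    (Polynomial.aeval Ae Ge).det ≠ 0 := by
  set c : ℂ := - (Ge.eval (iE lam)).snd / (Polynomial.derivative G).eval lam with hc
  set le : DualNumber ℂ := iE lam + TrivSqZeroExt.inr c with hle
  have hroot : Ge.IsRoot le := by
    rw [Polynomial.IsRoot, hle, eval_shift, hG]
    apply TrivSqZeroExt.ext
    · simp [fE_eval, hG, hG0]
    · simp only [TrivSqZeroExt.snd_add, TrivSqZeroExt.snd_inr, TrivSqZeroExt.snd_zero, hc]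
      field_simp
      ring
  obtain ⟨k, hk⟩ := Polynomial.dvd_iff_isRoot.2 hroot
  have hfl : fE le = lam := by simp [hle]
  have hGk : G = (Polynomial.X - Polynomial.C lam) * k.map fE := by
    rw [← hG, hk, Polynomial.map_mul]
    congr 1
    rw [Polynomial.map_sub, Polynomial.map_X, Polynomial.map_C, hfl]
  -- the cofactor is invertible
  have hkdet : ((Polynomial.aeval Ae k).det).fst ≠ 0 := by
    rw [← fE_apply, RingHom.map_det]
    have : fE.mapMatrix (Polynomial.aeval Ae k) = Polynomial.aeval A (k.map fE) := by
      rw [← hA]; exact aeval_map fE Ae k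
    rw [this, Ne, det_aeval_eq_zero_iff hn]
    rintro ⟨t, ht, hkt⟩
    by_cases htl : t = lam
    · subst htl
      apply hG1
      rw [hGk, Polynomial.derivative_mul]
      simp [hkt]
    · apply hG2 t htl ht
      rw [hGk]; simp [hkt]
  have hdet : (Polynomial.aeval Ae (Polynomial.X - Polynomial.C le)).det =
      (-1) ^ n * Ae.charpoly.eval le := by
    rw [Matrix.eval_charpoly]
    have : Polynomial.aeval Ae (Polynomial.X - Polynomial.C le) = -(scalar (Fin n) le - Ae) := by
      simp [Matrix.algebraMap_eq_diagonal]
    rw [this, Matrix.det_neg, Fintype.card_fin]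
  have hchimap : Ae.charpoly.map fE = A.charpoly := by
    rw [← hA]; exact (Matrix.charpoly_map Ae fE).symm
  have hcp : Ae.charpoly.eval le = TrivSqZeroExt.inr ((Ae.charpoly.eval (iE lam)).snd +
      c * (Polynomial.derivative A.charpoly).eval lam) := by
    rw [hle, eval_shift, hchimap]
    apply TrivSqZeroExt.ext
    · simp [fE_eval, hchimap, hchi]
    · simp
  intro h0
  rw [hk, map_mul, Matrix.det_mul, hdet, hcp] at h0
  have hne : (Ae.charpoly.eval (iE lam)).snd + c * (Polynomial.derivative A.charpoly).eval lam ≠ 0 := by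
    intro h
    apply hcond
    rw [hc] at h
    field_simp at h
    linear_combination h
  have hpm : ((-1 : DualNumber ℂ) ^ n) * (-1) ^ n = 1 := by
    rw [← mul_pow]; simp
  have h2 := congrArg (fun z => ((-1 : DualNumber ℂ) ^ n) * z) h0
  simp only [mul_zero] at h2
  rw [← mul_assoc, ← mul_assoc, hpm, one_mul] at h2
  have h3 := congrArg TrivSqZeroExt.snd h2
  simp at h3
  rcases h3 with h3 | h3
  · exact hne h3
  · exact hkdet h3

end

section
open Matrix

/-- perturbed matrix -/
def pert {n : ℕ} (M : Matrix (Fin n) (Fin n) ℂ) (a b : Fin n → ℂ) :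
    Matrix (Fin n) (Fin n) (DualNumber ℂ) :=
  Matrix.of fun i j => (M i j, a i * b j)

lemma pert_map {n : ℕ} (M : Matrix (Fin n) (Fin n) ℂ) (a b : Fin n → ℂ) :
    (pert M a b).map fE = M := by
  ext i j; rfl

lemma pert_charpoly {n : ℕ} (M : Matrix (Fin n) (Fin n) ℂ) (a b : Fin n → ℂ) (lam : ℂ) :
    ((pert M a b).charpoly.eval (iE lam)).snd =
      - (b ⬝ᵥ ((scalar (Fin n) lam - M).adjugate *ᵥ a)) := by
  rw [Matrix.eval_charpoly]
  have h : scalar (Fin n) (iE lam) - pert M a b = iE.mapMatrix (scalar (Fin n) lam - M) +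
      vecMulVec (fun i => TrivSqZeroExt.inr (-a i)) (fun j => iE (b j)) := by
    ext i j
    · simp [pert, vecMulVec, Matrix.diagonal_apply]
      split_ifs <;> simp <;> rfl
    · simp [pert, vecMulVec, Matrix.diagonal_apply]
      split_ifs <;> simp <;> first | rfl | exact mul_comm _ _
  rw [h, det_lemma, ← RingHom.map_det, ← RingHom.map_adjugate]
  simp only [TrivSqZeroExt.snd_add, iE_snd, zero_add]
  simp only [dotProduct, mulVec, TrivSqZeroExt.snd_sum, TrivSqZeroExt.snd_mul, 
    TrivSqZeroExt.fst_sum, iE_fst, iE_snd]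
  simp [TrivSqZeroExt.snd_sum, Finset.mul_sum]

lemma charpoly_deriv_case {n : ℕ} (M : Matrix (Fin n) (Fin n) ℂ) (u : Fin n → ℂ) (lam : ℂ)
    (h : (Polynomial.derivative M.charpoly).eval lam = 0) :
    M *ᵥ (fun i => (Polynomial.derivative (yv (RingHom.id ℂ) M u i)).eval lam) =
      lam • (fun i => (Polynomial.derivative (yv (RingHom.id ℂ) M u i)).eval lam) +
        (scalar (Fin n) lam - M).adjugate *ᵥ u := by
  have h1 : (scalar (Fin n) lam - M).adjugate *ᵥ u = 
    (fun i => (yv (RingHom.id ℂ) M u i).eval lam) := by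
    rw [yv_eval]; rfl
  rw [h1]
  ext i
  have h2 := congrArg (fun p => (Polynomial.derivative p).eval lam)
    (congrFun (yv_identity (RingHom.id ℂ) M u) i)
  simp only [Pi.smul_apply, smul_eq_mul, Polynomial.derivative_mul, Polynomial.eval_add,
    Polynomial.eval_mul, h, Polynomial.derivative_C, Polynomial.eval_zero, mul_zero,
    zero_mul, add_zero, mulVec, dotProduct, Polynomial.derivative_sum,
    Polynomial.eval_finsetSum, Finset.sum_add_distrib] at h2
  simp only [mulVec, dotProduct, Pi.add_apply, Pi.smul_apply, smul_eq_mul]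
  have e1 : ∑ j, Polynomial.eval lam (Polynomial.derivative (M.charmatrix i j)) *
      Polynomial.eval lam (yv (RingHom.id ℂ) M u j) =
      Polynomial.eval lam (yv (RingHom.id ℂ) M u i) := by
    rw [Finset.sum_eq_single i]
    · simp [charmatrix_apply]
    · intro j _ hj
      simp [charmatrix_apply, hj.symm]
    · simp
  have e2 : ∑ j, Polynomial.eval lam (M.charmatrix i j) *
      Polynomial.eval lam (Polynomial.derivative (yv (RingHom.id ℂ) M u j)) =
      lam * Polynomial.eval lam (Polynomial.derivative (yv (RingHom.id ℂ) M u i)) -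
      ∑ j, M i j * Polynomial.eval lam (Polynomial.derivative (yv (RingHom.id ℂ) M u j)) := by
    simp only [charmatrix_apply, Polynomial.eval_sub, Polynomial.eval_C, sub_mul,
      Finset.sum_sub_distrib]
    congr 1
    rw [Finset.sum_eq_single i]
    · simp
    · intro j _ hj
      simp [hj.symm]
    · simp
  rw [e1, e2] at h2
  linear_combination -h2

lemma grad_ne {n d : ℕ} (hn : 0 < n) (hd2 : 2 ≤ d) (f : MvPolynomial (Fin n) ℂ) (hf0 : f ≠ 0)
    (hf : f.IsHomogeneous d) (A : MatSpace n) (hMV : ¬ MV d f A) (u b : Fin n → ℂ)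
    (hp : MvPolynomial.eval A (ppoly f u) = 0)
    (hD : MvPolynomial.eval A (ppoly (lf b) u) ≠ 0) :
    ∃ B, gd (ppoly f u) A B ≠ 0 := by
  have hd : 0 < d := by omega
  obtain ⟨v, lam, hdet, hv, hv0, hbv, hfv, hMv⟩ := ppoly_conv hn f u b A hp hD
  set M := toMat A with hM
  -- other eigenvalues
  have hother : ∀ mu, mu ≠ lam → (scalar (Fin n) mu - M).det = 0 →
      (gp (RingHom.id ℂ) f M u).eval mu ≠ 0 := by
    intro mu hmu hdetmu h0
    rw [gp_eval] at h0
    set z := (scalar (Fin n) mu - M).adjugate *ᵥ u with hz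
    have h0 : MvPolynomial.eval z f = 0 := h0
    have hMz : M *ᵥ z = mu • z := adj_eig _ _ _ hdetmu
    have hz0 : z ≠ 0 := by
      intro hz0
      apply hD
      rw [ppoly_eval, pp_zero_iff hn]
      refine ⟨mu, hdetmu, ?_⟩
      rw [← hM, ← hz, hz0]
      simp [lf]
    apply hMV
    refine MV_two hd f hf A v z lam mu (Ind_of hv0 ?_) hMv hfv hMz h0
    intro h
    obtain ⟨c, hc⟩ := Submodule.mem_span_singleton.1 h
    have h2 : M *ᵥ z = lam • z := by
      rw [← hc, mulVec_smul, hMv, smul_comm]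
    rw [hMz, ← sub_eq_zero, ← sub_smul] at h2
    rcases smul_eq_zero.1 h2 with h3 | h3
    · exact hmu (sub_eq_zero.1 h3)
    · exact hz0 h3
  set g := gp (RingHom.id ℂ) f M u with hg
  have hg0 : g.eval lam = 0 := by
    rw [hg, gp_eval]
    rw [hv] at hfv
    exact hfv
  have hchi : M.charpoly.eval lam = 0 := by rw [Matrix.eval_charpoly]; exact hdet
  -- reduction to the dual number computation
  have red : ∀ a : Fin n → ℂ, pp iE f (pert M a b) u ≠ 0 → ∃ B, gd (ppoly f u) A B ≠ 0 := by
    intro a ha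
    refine ⟨fun ij => a ij.1 * b ij.2, ?_⟩
    intro h
    apply ha
    let Z : Fin n × Fin n → DualNumber ℂ := fun ij => pert M a b ij.1 ij.2
    have h1 := ppoly_eval₂ iE f u Z
    have h2 : pert M a b = Matrix.of fun i j => Z (i, j) := rfl
    rw [h2]
    refine h1.symm.trans ?_
    apply TrivSqZeroExt.ext
    · exact (dual_fst (ppoly f u) Z).trans hp
    · exact (dual_snd (ppoly f u) Z).trans h
  have hgmap : ∀ a : Fin n → ℂ, (gp iE f (pert M a b) u).map fE = g := by
    intro a
    rw [gp_map, pert_map]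
    congr 1
  have hkz : ∀ x, (scalar (Fin n) lam - M) *ᵥ x = 0 → x ∈ Submodule.span ℂ {v} := by
    intro x hx
    by_contra hcon
    exact hMV (MV_eigspace hd f hf hd2 A v x lam (Ind_of hv0 hcon) hMv ((ker_iff _ _ _).1 hx))
  by_cases hder : (Polynomial.derivative M.charpoly).eval lam = 0
  · -- multiple eigenvalue
    have hw := charpoly_deriv_case M u lam hder
    set w := (fun i => (Polynomial.derivative (yv (RingHom.id ℂ) M u i)).eval lam) with hwdef
    rw [← hv] at hw
    have hwind : w ∉ Submodule.span ℂ {v} := by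
      intro h
      obtain ⟨c, hc⟩ := Submodule.mem_span_singleton.1 h
      rw [← hc, mulVec_smul, hMv, smul_comm] at hw
      exact hv0 (by simpa using hw)
    have hg1 : (Polynomial.derivative g).eval lam = gd f v w := by
      have := poly_chain f (yv (RingHom.id ℂ) M u) lam
      rw [yv_eval] at this
      rw [hv]
      exact this
    have hg1' : (Polynomial.derivative g).eval lam ≠ 0 := by
      rw [hg1]
      intro h
      exact hMV (MV_jordan hd f hf A v w lam 1 (Ind_of hv0 hwind) hMv hfv (by simpa using hw) h)
    apply red u
    refine core hn _ M (pert_map M u b) _ g (hgmap u) lam hchi hg0 hg1' hother ?_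
    rw [pert_charpoly, hder, ← hv, mul_zero, sub_zero]
    exact mul_ne_zero (neg_ne_zero.2 hbv) hg1'
  · -- simple eigenvalue
    obtain ⟨s0, hs0⟩ : ∃ s0, gd f v s0 ≠ 0 := by
      by_contra hcon
      push Not at hcon
      obtain ⟨x, hx⟩ := exists_ind f hf hf0 v hv0 hfv
      exact hMV (MV_crit hd f hf A v x lam hx hMv hfv hcon)
    set Cm := scalar (Fin n) lam - M with hCm
    set a := Cm *ᵥ s0 with ha
    set s : ℂ := (1 - (Polynomial.derivative g).eval lam) / 
      (Polynomial.derivative M.charpoly).eval lam with hs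
    have hchi0 : ((pert M a b).charpoly.eval (iE lam)).snd = 0 := by
      rw [pert_charpoly, ha, mulVec_mulVec, adjugate_mul, hdet]
      simp
    have hchimap : (pert M a b).charpoly.map fE = M.charpoly := by
      rw [← Matrix.charpoly_map, pert_map]
    have hchi00 : (pert M a b).charpoly.eval (iE lam) = 0 := by
      apply TrivSqZeroExt.ext
      · rw [fE_eval, hchimap]; exact hchi
      · exact hchi0
    -- variation of `y`
    set Y := (scalar (Fin n) (iE lam) - pert M a b).adjugate *ᵥ (fun i => iE (u i)) with hY
    have hYeq : (scalar (Fin n) (iE lam) - pert M a b) *ᵥ Y = 0 := by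
      rw [hY, mulVec_mulVec, mul_adjugate, ← Matrix.eval_charpoly, hchi00, zero_smul, zero_mulVec]
    have hYf : (fun i => (Y i).fst) = v := by
      have h1 := yv_eval iE (pert M a b) u (iE lam)
      rw [← hY] at h1
      have h2 := yv_eval (RingHom.id ℂ) M u lam
      rw [hv]
      refine Eq.trans ?_ h2
      rw [← h1]
      ext i
      simp only [fE_eval]
      rw [yv_map, pert_map]
      congr 1
    have hYs : Cm *ᵥ (fun i => (Y i).snd) = (b ⬝ᵥ v) • a := by
      ext i
      have := congrArg TrivSqZeroExt.snd (congrFun hYeq i)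
      simp only [mulVec, dotProduct, TrivSqZeroExt.snd_sum, TrivSqZeroExt.snd_mul, Pi.zero_apply,
        TrivSqZeroExt.snd_zero, Finset.sum_add_distrib] at this
      have e1 : ∀ j, ((scalar (Fin n) (iE lam) - pert M a b) i j).fst = Cm i j := by
        intro j
        simp [hCm, pert, Matrix.diagonal_apply]
        split_ifs <;> simp <;> rfl
      have e2 : ∀ j, ((scalar (Fin n) (iE lam) - pert M a b) i j).snd = - (a i * b j) := by
        intro j
        simp [pert, Matrix.diagonal_apply]
        split_ifs <;> simp <;> rfl
      have e3 : ∀ j, (Y j).fst = v j := fun j => congrFun hYf j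
      simp only [e1, e2, e3] at this
      simp only [mulVec, dotProduct, Pi.smul_apply, smul_eq_mul, Finset.sum_mul]
      have e4 : ∑ x, MulOpposite.op (v x) • -(a i * b x) = - ∑ x, b x * v x * a i := by
        rw [← Finset.sum_neg_distrib]
        refine Finset.sum_congr rfl fun x _ => ?_
        simp; ring
      rw [e4] at this
      simp only [smul_eq_mul] at this
      linear_combination this
    obtain ⟨κ, hκ⟩ : ∃ κ : ℂ, (fun i => (Y i).snd) = (b ⬝ᵥ v) • s0 + κ • v := by
      have : (fun i => (Y i).snd) - (b ⬝ᵥ v) • s0 ∈ Submodule.span ℂ {v} := by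
        apply hkz
        rw [mulVec_sub, hYs, mulVec_smul, ← ha, sub_self]
      obtain ⟨κ, hκ⟩ := Submodule.mem_span_singleton.1 this
      exact ⟨κ, by rw [hκ]; abel⟩
    have hdg : ((gp iE f (pert M a b) u).eval (iE lam)).snd = (b ⬝ᵥ v) * gd f v s0 := by
      rw [gp_eval, ← hY, dual_snd, hYf, hκ, gd_add, gd_smul, gd_smul, euler f hf, hfv]
      simp
    apply red a
    have hpp : pp iE f (pert M a b) u = (Polynomial.aeval (pert M a b)
        (gp iE f (pert M a b) u + Polynomial.C (iE s) * (pert M a b).charpoly)).det := by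
      rw [map_add, map_mul, Matrix.aeval_self_charpoly, mul_zero, add_zero]
      rfl
    have hiE : fE (iE s) = s := rfl
    have hd1 : (Polynomial.derivative (g + Polynomial.C s * M.charpoly)).eval lam = 1 := by
      simp only [map_add, Polynomial.derivative_C_mul, Polynomial.eval_add, Polynomial.eval_mul,
        Polynomial.eval_C, hs]
      field_simp
      ring
    rw [hpp]
    refine core hn _ M (pert_map M a b) _ (g + Polynomial.C s * M.charpoly) ?_ lam hchi ?_ ?_ ?_ ?_
    · rw [Polynomial.map_add, Polynomial.map_mul, hgmap, hchimap, Polynomial.map_C, hiE]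
    · simp [hg0, hchi]
    · rw [hd1]; exact one_ne_zero
    · intro mu hmu hdetmu
      have : M.charpoly.eval mu = 0 := by rw [Matrix.eval_charpoly]; exact hdetmu
      simpa [this] using hother mu hmu hdetmu
    · rw [hchi0, zero_mul, zero_sub, Polynomial.eval_add, Polynomial.eval_mul, hchi00, mul_zero,
        add_zero, hdg]
      exact neg_ne_zero.2 (mul_ne_zero (mul_ne_zero hbv hs0) hder)

end

section
open Matrix

lemma lin_form {n : ℕ} (f : MvPolynomial (Fin n) ℂ) (hf : f.IsHomogeneous 1) :
    ∃ l : Fin n → ℂ, ∀ v, MvPolynomial.eval v f = l ⬝ᵥ v := by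
  have h : ∀ i, ∃ c, MvPolynomial.pderiv i f = MvPolynomial.C c := by
    intro i
    have h0 : (MvPolynomial.pderiv i f).IsHomogeneous 0 := hf.pderiv
    exact ⟨_, MvPolynomial.totalDegree_eq_zero_iff_eq_C.1
      ((MvPolynomial.totalDegree_zero_iff_isHomogeneous _).2 h0)⟩
  choose l hl using h
  refine ⟨l, fun v => ?_⟩
  have := euler f hf v
  simp only [gd, hl, MvPolynomial.eval_C, Nat.cast_one, one_mul] at this
  rw [← this]
  simp [dotProduct, mul_comm]

/-- matrix with rows `l, lM, …, lM^(n-1)` -/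
def Krow {n : ℕ} {S : Type*} [CommRing S] (l : Fin n → S) (M : Matrix (Fin n) (Fin n) S) :
    Matrix (Fin n) (Fin n) S :=
  Matrix.of fun i => l ᵥ* (M ^ (i : ℕ))

/-- its determinant, as a polynomial -/
def kpoly {n : ℕ} (l : Fin n → ℂ) : MvPolynomial (Fin n × Fin n) ℂ :=
  (Krow (fun i => MvPolynomial.C (l i)) (genMat n)).det

lemma Krow_map {n : ℕ} {S T : Type*} [CommRing S] [CommRing T] (φ : S →+* T) (l : Fin n → S)
    (M : Matrix (Fin n) (Fin n) S) :
    φ.mapMatrix (Krow l M) = Krow (fun i => φ (l i)) (φ.mapMatrix M) := by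
  ext i j
  simp only [Krow, ← map_pow]
  simp [vecMul, dotProduct]

lemma kpoly_eval₂ {n : ℕ} {S : Type*} [CommRing S] (φ : ℂ →+* S) (l : Fin n → ℂ)
    (A : Fin n × Fin n → S) :
    MvPolynomial.eval₂ φ A (kpoly l) =
      (Krow (fun i => φ (l i)) (Matrix.of fun i j => A (i, j))).det := by
  unfold kpoly
  rw [← MvPolynomial.coe_eval₂Hom, RingHom.map_det, Krow_map]
  congr 2
  · ext1 x; simp
  · ext i j; simp [genMat]

lemma kpoly_eval {n : ℕ} (l : Fin n → ℂ) (A : MatSpace n) :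
    MvPolynomial.eval A (kpoly l) = (Krow l (toMat A)).det := by
  exact kpoly_eval₂ (RingHom.id ℂ) l A

lemma rec_lemma {n : ℕ} (l x : Fin n → ℂ) (M : Matrix (Fin n) (Fin n) ℂ) (q : Polynomial ℂ)
    (hq : q.Monic) (h0 : l ᵥ* (Polynomial.aeval M q) = 0)
    (hx : ∀ i < q.natDegree, (l ᵥ* (M ^ i)) ⬝ᵥ x = 0) (i : ℕ) :
    (l ᵥ* (M ^ i)) ⬝ᵥ x = 0 := by
  have key : l ᵥ* (M ^ i) = l ᵥ* (Polynomial.aeval M (Polynomial.X ^ i %ₘ q)) := by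
    conv_lhs => rw [← Polynomial.aeval_X (R := ℂ) M, ← map_pow,
      ← Polynomial.modByMonic_add_div (Polynomial.X ^ i) q, map_add, map_mul, vecMul_add,
      ← vecMul_vecMul, h0, zero_vecMul, add_zero]
  rw [key]
  by_cases h1 : q = 1
  · simp [h1]
  have hdeg := Polynomial.natDegree_modByMonic_lt (Polynomial.X ^ i) hq h1
  rw [Polynomial.aeval_eq_sum_range' hdeg]
  have : l ᵥ* (∑ k ∈ Finset.range q.natDegree, (Polynomial.X ^ i %ₘ q).coeff k • M ^ k) =
      ∑ k ∈ Finset.range q.natDegree, (Polynomial.X ^ i %ₘ q).coeff k • (l ᵥ* M ^ k) := by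
    rw [vecMul_sum]
    simp [vecMul_smul]
  rw [this, sum_dotProduct]
  refine Finset.sum_eq_zero fun k hk => ?_
  rw [smul_dotProduct, hx k (Finset.mem_range.1 hk), smul_zero]

/-- the largest invariant subspace in the kernel of `l` -/
def Wsub {n : ℕ} (l : Fin n → ℂ) (M : Matrix (Fin n) (Fin n) ℂ) : Submodule ℂ (Fin n → ℂ) where
  carrier := {x | ∀ i : ℕ, (l ᵥ* (M ^ i)) ⬝ᵥ x = 0}
  add_mem' := by
    intro a b ha hb i
    rw [dotProduct_add, ha i, hb i, add_zero]
  zero_mem' := by intro i; simp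
  smul_mem' := by
    intro c x hx i
    rw [dotProduct_smul, hx i, smul_zero]

lemma Wsub_eig {n : ℕ} (l x : Fin n → ℂ) (M : Matrix (Fin n) (Fin n) ℂ) (hx0 : x ≠ 0)
    (hx : x ∈ Wsub l M) : ∃ v, l ⬝ᵥ v = 0 ∧ IsEigenvector M v := by
  have hinv : ∀ y ∈ Wsub l M, (Matrix.toLin' M) y ∈ Wsub l M := by
    intro y hy i
    rw [Matrix.toLin'_apply, dotProduct_mulVec, vecMul_vecMul, ← pow_succ]
    exact hy (i + 1)
  haveI : Nontrivial (Wsub l M) := ⟨⟨x, hx⟩, 0, fun h => hx0 (congrArg Subtype.val h)⟩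
  obtain ⟨c, hc⟩ := Module.End.exists_eigenvalue ((Matrix.toLin' M).restrict hinv)
  obtain ⟨v, hv⟩ := hc.exists_hasEigenvector
  refine ⟨v.1, ?_, ?_, c, ?_⟩
  · have := v.2 0
    simpa using this
  · intro h
    exact hv.2 (Subtype.ext h)
  · have := congrArg Subtype.val hv.apply_eq_smul
    simpa using this

lemma Krow_conv {n : ℕ} (l : Fin n → ℂ) (M : Matrix (Fin n) (Fin n) ℂ)
    (h : (Krow l M).det = 0) : ∃ v, l ⬝ᵥ v = 0 ∧ IsEigenvector M v := by
  obtain ⟨x, hx0, hx⟩ := Matrix.exists_mulVec_eq_zero_iff.2 h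
  refine Wsub_eig l x M hx0 ?_
  refine rec_lemma l x M M.charpoly M.charpoly_monic ?_ ?_
  · rw [Matrix.aeval_self_charpoly, vecMul_zero]
  · intro i hi
    rw [Matrix.charpoly_natDegree_eq_dim, Fintype.card_fin] at hi
    exact congrFun hx ⟨i, hi⟩

lemma Krow_vanish {n : ℕ} (l v : Fin n → ℂ) (M : Matrix (Fin n) (Fin n) ℂ)
    (h : l ⬝ᵥ v = 0) (hv : IsEigenvector M v) : (Krow l M).det = 0 := by
  obtain ⟨hv0, c, hc⟩ := hv
  refine Matrix.exists_mulVec_eq_zero_iff.1 ⟨v, hv0, ?_⟩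
  ext i
  change (l ᵥ* (M ^ (i : ℕ))) ⬝ᵥ v = 0
  rw [← dotProduct_mulVec, pow_eig M v c hc, dotProduct_smul, h, smul_zero]

lemma rows_indep {m : ℕ} (l : Fin (m + 1) → ℂ) (M : Matrix (Fin (m + 1)) (Fin (m + 1)) ℂ)
    (hW : ∀ v w, v ∈ Wsub l M → w ∈ Wsub l M → ¬ Ind v w) :
    LinearIndependent ℂ (fun i : Fin m => l ᵥ* (M ^ (i : ℕ))) := by
  rw [Fintype.linearIndependent_iff]
  intro g hg
  by_contra hcon
  set q0 : Polynomial ℂ := ∑ i : Fin m, Polynomial.monomial (i : ℕ) (g i) with hq0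
  have hcoeff : ∀ i : Fin m, q0.coeff i = g i := by
    intro i
    rw [hq0, Polynomial.finsetSum_coeff, Finset.sum_eq_single i]
    · simp
    · intro j _ hj
      rw [Polynomial.coeff_monomial, if_neg (fun h => hj (Fin.ext h))]
    · simp
  have hne : q0 ≠ 0 := by
    intro h
    apply hcon
    intro i
    rw [← hcoeff, h]; simp
  have hm : 0 < m := by
    by_contra h
    push Not at hcon
    obtain ⟨i, _⟩ := hcon
    exact h (i.pos)
  have hdeg : q0.natDegree < m := by
    have : q0.natDegree ≤ m - 1 := by
      refine Polynomial.natDegree_sum_le_of_forall_le _ _ fun i _ => ?_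
      refine (Polynomial.natDegree_monomial_le _).trans ?_
      omega
    omega
  have hlq0 : l ᵥ* (Polynomial.aeval M q0) = 0 := by
    rw [← hg, hq0, map_sum, vecMul_sum]
    refine Finset.sum_congr rfl fun i _ => ?_
    rw [Polynomial.aeval_monomial, ← vecMul_smul, Algebra.smul_def]
  set q := q0 * Polynomial.C q0.leadingCoeff⁻¹ with hq
  have hqm : q.Monic := Polynomial.monic_mul_leadingCoeff_inv hne
  have hqd : q.natDegree = q0.natDegree := Polynomial.natDegree_mul_leadingCoeff_inv _ hne
  have hlq : l ᵥ* (Polynomial.aeval M q) = 0 := by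
    rw [hq, map_mul, ← vecMul_vecMul, hlq0, zero_vecMul]
  let T : (Fin (m + 1) → ℂ) →ₗ[ℂ] (Fin q.natDegree → ℂ) :=
    Matrix.mulVecLin (Matrix.of fun i : Fin q.natDegree => l ᵥ* (M ^ (i : ℕ)))
  have hker : ∀ x ∈ LinearMap.ker T, x ∈ Wsub l M := by
    intro x hx
    refine rec_lemma l x M q hqm hlq fun i hi => ?_
    exact congrFun (LinearMap.mem_ker.1 hx) ⟨i, hi⟩
  have hrk : 2 ≤ Module.finrank ℂ (LinearMap.ker T) := by
    have h1 := T.finrank_range_add_finrank_ker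
    have h2 := Submodule.finrank_le (LinearMap.range T)
    simp only [Module.finrank_fin_fun] at h1 h2
    omega
  haveI : Nontrivial (LinearMap.ker T) := Module.nontrivial_of_finrank_pos (R := ℂ) (by omega)
  obtain ⟨v, hv⟩ := exists_ne (0 : LinearMap.ker T)
  have hex : ∃ w : LinearMap.ker T, w ∉ Submodule.span ℂ {v} := by
    by_contra hc
    push Not at hc
    have : Module.finrank ℂ (LinearMap.ker T) ≤ 1 :=
      finrank_le_one v fun w => Submodule.mem_span_singleton.1 (hc w)
    omega
  obtain ⟨w, hw⟩ := hex
  refine hW v.1 w.1 (hker _ v.2) (hker _ w.2) (Ind_of ?_ ?_)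
  · intro h; exact hv (Subtype.ext h)
  · intro h
    obtain ⟨c, hc⟩ := Submodule.mem_span_singleton.1 h
    exact hw (Submodule.mem_span_singleton.2 ⟨c, Subtype.ext hc⟩)

lemma pert_eq {n : ℕ} (M : Matrix (Fin n) (Fin n) ℂ) (a b : Fin n → ℂ) :
    pert M a b = iE.mapMatrix M + 
      vecMulVec (fun i => TrivSqZeroExt.inr (a i)) (fun j => iE (b j)) := by
  ext i j
  · simp [pert, vecMulVec]
    rfl
  · simp [pert, vecMulVec]
    first | rfl | exact mul_comm _ _

lemma pert_row {n : ℕ} (l : Fin n → ℂ) (M : Matrix (Fin n) (Fin n) ℂ) (a b : Fin n → ℂ) :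
    (fun i => iE (l i)) ᵥ* pert M a b = (fun i => iE ((l ᵥ* M) i)) +
      (TrivSqZeroExt.inr (l ⬝ᵥ a) : DualNumber ℂ) • fun j => iE (b j) := by
  rw [pert_eq, vecMul_add, vecMul_vecMulVec]
  congr 1
  · ext i <;> simp [vecMul, dotProduct, TrivSqZeroExt.snd_sum, TrivSqZeroExt.fst_sum]
  · congr 1
    ext <;> simp [dotProduct, TrivSqZeroExt.snd_sum, TrivSqZeroExt.fst_sum, mul_comm]

lemma grad_one {m : ℕ} (l : Fin (m + 2) → ℂ) (A : MatSpace (m + 2))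
    (hW : ∀ v w, v ∈ Wsub l (toMat A) → w ∈ Wsub l (toMat A) → ¬ Ind v w) :
    ∃ B, gd (kpoly l) A B ≠ 0 := by
  set M := toMat A with hM
  have hind := rows_indep l M hW
  obtain ⟨b, hb⟩ : ∃ b, b ∉ Submodule.span ℂ
      (Set.range (fun i : Fin (m + 1) => l ᵥ* (M ^ (i : ℕ)))) := by
    by_contra hc
    push Not at hc
    have h1 := finrank_range_le_card (R := ℂ) (fun i : Fin (m + 1) => l ᵥ* (M ^ (i : ℕ)))
    have h2 : Submodule.span ℂ (Set.range (fun i : Fin (m + 1) => l ᵥ* (M ^ (i : ℕ)))) = ⊤ :=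
      Submodule.eq_top_iff'.2 hc
    rw [Set.finrank, h2, finrank_top, Module.finrank_fin_fun, Fintype.card_fin] at h1
    omega
  have hli := linearIndependent_finSnoc.2 ⟨hind, hb⟩
  set K' := (Krow l M).updateRow (Fin.last (m + 1)) b with hK'
  have hK'row : K'.row = (Fin.snoc (fun i : Fin (m + 1) => l ᵥ* (M ^ (i : ℕ))) b :
      Fin (m + 2) → Fin (m + 2) → ℂ) := by
    ext i j
    refine Fin.lastCases ?_ (fun i => ?_) i
    · simp [hK', Matrix.row]
    · simp [hK', Matrix.row, Krow, Matrix.updateRow_ne (Fin.castSucc_lt_last i).ne]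
  have hu : IsUnit K' := by
    rw [← Matrix.linearIndependent_rows_iff_isUnit, hK'row]
    exact hli
  have hdet : K'.det ≠ 0 := ((Matrix.isUnit_iff_isUnit_det _).1 hu).ne_zero
  let e : Fin (m + 2) := (Fin.last m).castSucc
  set a := K'⁻¹ *ᵥ Pi.single e 1 with ha
  have hKa : K' *ᵥ a = Pi.single e 1 := by
    rw [ha, mulVec_mulVec, Matrix.mul_nonsing_inv _ ((Matrix.isUnit_iff_isUnit_det _).1 hu),
      one_mulVec]
  have hra : ∀ i : Fin (m + 1), (l ᵥ* (M ^ (i : ℕ))) ⬝ᵥ a = if (i : ℕ) = m then 1 else 0 := by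
    intro i
    have h1 := congrFun hKa i.castSucc
    have h2 : (K' *ᵥ a) i.castSucc = (l ᵥ* (M ^ (i : ℕ))) ⬝ᵥ a := by
      change K'.row i.castSucc ⬝ᵥ a = _
      rw [hK'row]; simp
    rw [← h2, h1, Pi.single_apply]
    congr 1
    simp [e, Fin.ext_iff]
  refine ⟨fun ij => a ij.1 * b ij.2, ?_⟩
  let Z : Fin (m + 2) × Fin (m + 2) → DualNumber ℂ := fun ij => pert M a b ij.1 ij.2
  have hZ : gd (kpoly l) A (fun ij => a ij.1 * b ij.2) = 
      (MvPolynomial.eval₂ iE Z (kpoly l)).snd := (dual_snd (kpoly l) Z).symm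
  have h2 : (Matrix.of fun i j => Z (i, j)) = pert M a b := rfl
  rw [hZ, kpoly_eval₂, h2]
  have hrow : ∀ i : ℕ, i < m + 1 → (fun i => iE (l i)) ᵥ* (pert M a b) ^ i =
      fun j => iE ((l ᵥ* M ^ i) j) := by
    intro i
    induction i with
    | zero => intro _; simp
    | succ i ih =>
      intro hi
      rw [pow_succ, ← vecMul_vecMul, ih (by omega), pert_row, hra ⟨i, by omega⟩]
      simp only [vecMul_vecMul, ← pow_succ]
      rw [if_neg (by omega)]
      simp
  have hlast : (fun i => iE (l i)) ᵥ* (pert M a b) ^ (m + 1) =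
      (fun j => iE ((l ᵥ* M ^ (m + 1)) j)) +
        (TrivSqZeroExt.inr 1 : DualNumber ℂ) • fun j => iE (b j) := by
    rw [pow_succ, ← vecMul_vecMul, hrow m (by omega), pert_row, hra ⟨m, by omega⟩]
    simp only [vecMul_vecMul, ← pow_succ]
    simp
  have hmat : Krow (fun i => iE (l i)) (pert M a b) =
      (iE.mapMatrix (Krow l M)).updateRow (Fin.last (m + 1))
        ((fun j => iE ((l ᵥ* M ^ (m + 1)) j)) +
        (TrivSqZeroExt.inr 1 : DualNumber ℂ) • fun j => iE (b j)) := by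
    ext1 i j
    refine Fin.lastCases ?_ (fun i => ?_) i
    · rw [updateRow_self, ← hlast]; rfl
    · rw [Matrix.updateRow_ne (Fin.castSucc_lt_last i).ne]
      exact congrFun (hrow i i.2) j
  have hu1 : (iE.mapMatrix (Krow l M)).updateRow (Fin.last (m + 1))
        (fun j => iE ((l ᵥ* M ^ (m + 1)) j)) = iE.mapMatrix (Krow l M) := by
    exact Matrix.updateRow_eq_self _ _
  have hu2 : (iE.mapMatrix (Krow l M)).updateRow (Fin.last (m + 1))
        (fun j => iE (b j)) = iE.mapMatrix K' := by
    rw [hK']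
    ext1 i j
    refine Fin.lastCases ?_ (fun i => ?_) i
    · simp
    · simp [Matrix.updateRow_ne (Fin.castSucc_lt_last i).ne]
  rw [hmat, det_updateRow_add, det_updateRow_smul, hu1, hu2, ← RingHom.map_det,
    ← RingHom.map_det]
  simpa using hdet

end

section
open Matrix

lemma smooth_two {n d : ℕ} (hn : 0 < n) (hd2 : 2 ≤ d) (f : MvPolynomial (Fin n) ℂ) (hf0 : f ≠ 0)
    (hf : f.IsHomogeneous d) (A : MatSpace n) (hMV : ¬ MV d f A)
    (hA : A ∈ zClosure (kalmanCone {x | MvPolynomial.eval x f = 0})) :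
    smoothAt (zClosure (kalmanCone {x | MvPolynomial.eval x f = 0})) A := by
  have hadj : ∀ t, (scalar (Fin n) t - toMat A).det = 0 →
      (scalar (Fin n) t - toMat A).adjugate ≠ 0 := by
    intro t ht
    obtain ⟨v, hv0, hv⟩ := Matrix.exists_mulVec_eq_zero_iff.2 ht
    refine adj_ne_zero _ v hv0 hv fun w hw => ?_
    by_contra hc
    exact hMV (MV_eigspace (by omega) f hf hd2 A v w t (Ind_of hv0 hc) ((ker_iff _ _ _).1 hv)
      ((ker_iff _ _ _).1 hw))
  obtain ⟨u, b, hub⟩ := exists_ub hn (toMat A) hadj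
  rw [← ppoly_eval] at hub
  have hpS : ∀ x ∈ kalmanCone {x | MvPolynomial.eval x f = 0},
      MvPolynomial.eval x (ppoly f u) = 0 := by
    rintro x ⟨v, hv, he⟩
    exact ppoly_vanish hn f hf u x v hv he
  have hp : MvPolynomial.eval A (ppoly f u) = 0 := (mem_zClosure_iff _ _).1 hA _ hpS
  obtain ⟨B, hB⟩ := grad_ne hn hd2 f hf0 hf A hMV u b hp hub
  refine smoothAt_of_local_hypersurface _ A (ppoly f u) (ppoly (lf b) u) hpS ?_ hp hub B hB
  intro x h1 h2
  obtain ⟨v, t, -, -, hv0, -, hfv, hv⟩ := ppoly_conv hn f u b x h1 h2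
  exact ⟨v, hfv, hv0, t, hv⟩

lemma smooth_one {n : ℕ} (hn : 0 < n) (f : MvPolynomial (Fin n) ℂ) (hf0 : f ≠ 0)
    (hf : f.IsHomogeneous 1) (A : MatSpace n) (hMV : ¬ MV 1 f A)
    (hA : A ∈ zClosure (kalmanCone {x | MvPolynomial.eval x f = 0})) :
    smoothAt (zClosure (kalmanCone {x | MvPolynomial.eval x f = 0})) A := by
  obtain ⟨l, hl⟩ := lin_form f hf
  have hpS : ∀ x ∈ kalmanCone {x | MvPolynomial.eval x f = 0},
      MvPolynomial.eval x (kpoly l) = 0 := by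
    rintro x ⟨v, hv, he⟩
    rw [kpoly_eval]
    exact Krow_vanish l v _ ((hl v).symm.trans hv) he
  have hp : MvPolynomial.eval A (kpoly l) = 0 := (mem_zClosure_iff _ _).1 hA _ hpS
  have hgrad : ∃ B, gd (kpoly l) A B ≠ 0 := by
    match n, hn with
    | 1, _ =>
      exfalso
      rw [kpoly_eval] at hp
      obtain ⟨v, hv, hv0, -⟩ := Krow_conv l _ hp
      have h0 : l 0 = 0 := by
        have h1 : v 0 ≠ 0 := by
          intro h
          apply hv0
          ext i
          rw [Subsingleton.elim i 0, h]; rfl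
        have h2 : l 0 * v 0 = 0 := by simpa [dotProduct] using hv
        exact (mul_eq_zero.1 h2).resolve_right h1
      apply hf0
      apply MvPolynomial.funext
      intro x
      rw [hl]
      simp [dotProduct, h0]
    | m + 2, _ =>
      apply grad_one
      intro v w hv hw hi
      have key : ∀ x, x ∈ Wsub l (toMat A) → ∀ i : ℕ,
          MvPolynomial.eval ((toMat A ^ i).mulVec x) f = 0 := by
        intro x hx i
        rw [hl, dotProduct_mulVec]
        exact hx i
      exact hMV (L1 one_pos f hf A v w hi (key v hv) (key w hw))
  obtain ⟨B, hB⟩ := hgrad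
  refine smoothAt_of_local_hypersurface _ A (kpoly l) 1 hpS ?_ hp (by simp) B hB
  intro x h1 _
  rw [kpoly_eval] at h1
  obtain ⟨v, hv, he⟩ := Krow_conv l _ h1
  exact ⟨v, (hl v).trans hv, he⟩

end

/-- For a hypersurface `X = V(f) ⊆ ℙ^{n-1}` of degree `d`, the reduced
singular locus of `𝒦(X)` is contained in the variety cut out by the `(N-1) × (N-1)` minors
of the square Kalman matrix `K_d(f)`. -/
theorem sing_kalman_subset_subminors (n d : ℕ) (hn : 0 < n) (hd : 0 < d)
    (f : MvPolynomial (Fin n) ℂ) (hf : f ≠ 0) (hhom : f.IsHomogeneous d)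
    (X : Set (Fin n → ℂ)) (hX : X = {x | MvPolynomial.eval x f = 0}) :
    singKalmanCone X ⊆
      {A : MatSpace n | ∀ e₁ e₂ : Fin (Fintype.card (MonIdx n d) - 1) → MonIdx n d,
        Function.Injective e₁ → Function.Injective e₂ →
        MvPolynomial.eval A
          (Matrix.det (Matrix.of fun i j => kalmanSq d (coeffVec d f) (e₁ i) (e₂ j))) = 0} := by
  subst hX
  intro A hA e₁ e₂ he₁ he₂
  refine (mem_zClosure_iff _ _).1 hA _ ?_
  rintro B ⟨hB, -, hsm⟩
  by_contra hne
  apply hsm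
  have hMV : ¬ MV d f B := fun h => hne (h e₁ e₂ he₁ he₂)
  rcases Nat.lt_or_ge 1 d with h | h
  · exact smooth_two hn h f hf hhom B hMV hB
  · obtain rfl : d = 1 := by omega
    exact smooth_one hn f hf hhom B hMV hB

end
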